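/- arXiv:math/0301330 — 2 statements merged into one kernel-verified Lean document; each statement's English description precedes it below -/
import Mathlib

section
/- Let τ ∈ ℝ_{<0}. For every z ∈ ℂ with |Re(z)| < 1 − τ^{-1} and |Re(z+2)| < 1 − τ^{-1}, the hyperbolic gamma function satisfies the first order difference equation G_τ(z+2) = 2·cos(π(z+1)τ/2)·G_τ(z). (Here q^u denotes exp(2πiτu).) -/
noncomputable section

open Complex MeasureTheory Set

/-- The integrand of Ruijsenaars' hyperbolic gamma function. -/
def hypInt (τ : ℝ) (z : ℂ) (y : ℝ) : ℂ :=
  (z / (y : ℂ) -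
      Complex.sinh ((τ : ℂ) * (y : ℂ) * z) /
        (Complex.sinh (y : ℂ) * Complex.sinh ((τ : ℂ) * (y : ℂ)))) / (y : ℂ)

/-- `γ_τ(z) = (1/(2i))·∫_0^∞ ( z/y − sinh(τyz)/(sinh(y)·sinh(τy)) ) dy/y`. -/
def hypGammaArg (τ : ℝ) (z : ℂ) : ℂ :=
  (2 * Complex.I)⁻¹ * ∫ y in Set.Ioi (0 : ℝ), hypInt τ z y

/-- `G_τ(z) = exp(i·γ_τ(z))` on the strip `|Re z| < 1 − τ⁻¹`. -/
def hypGammaStrip (τ : ℝ) (z : ℂ) : ℂ := Complex.exp (Complex.I * hypGammaArg τ z)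


lemma aux_norm_cosh_le (u : ℂ) : ‖Complex.cosh u‖ ≤ Real.exp |u.re| := by
  rw [Complex.cosh, norm_div]
  have h := norm_add_le (Complex.exp u) (Complex.exp (-u))
  rw [Complex.norm_exp, Complex.norm_exp] at h
  have h1 : Real.exp u.re ≤ Real.exp |u.re| := Real.exp_le_exp.2 (le_abs_self _)
  have h2 : Real.exp (-u).re ≤ Real.exp |u.re| := Real.exp_le_exp.2 (by simpa using neg_le_abs u.re)
  have h3 : ‖(2:ℂ)‖ = 2 := by simp
  rw [h3]
  linarith

lemma aux_norm_sinh_le_exp (u : ℂ) : ‖Complex.sinh u‖ ≤ Real.exp |u.re| := by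
  rw [Complex.sinh, norm_div]
  have h := norm_sub_le (Complex.exp u) (Complex.exp (-u))
  rw [Complex.norm_exp, Complex.norm_exp] at h
  have h1 : Real.exp u.re ≤ Real.exp |u.re| := Real.exp_le_exp.2 (le_abs_self _)
  have h2 : Real.exp (-u).re ≤ Real.exp |u.re| := Real.exp_le_exp.2 (by simpa using neg_le_abs u.re)
  have h3 : ‖(2:ℂ)‖ = 2 := by simp
  rw [h3]
  linarith

lemma aux_norm_sinh_le (u : ℂ) : ‖Complex.sinh u‖ ≤ Real.exp |u.re| * ‖u‖ := by
  have := Convex.norm_image_sub_le_of_norm_deriv_le (𝕜 := ℂ) (f := Complex.sinh)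
    (s := {v : ℂ | |v.re| ≤ |u.re|}) (x := 0) (y := u) (C := Real.exp |u.re|)
    (fun x _ => Complex.differentiable_sinh x)
    (fun x hx => by
      rw [Complex.deriv_sinh]
      exact (aux_norm_cosh_le x).trans (Real.exp_le_exp.2 hx))
    (by
      have : {v : ℂ | |v.re| ≤ |u.re|} = Complex.reLm ⁻¹' (Set.Icc (-|u.re|) |u.re|) := by
        ext v; simp [abs_le]
      rw [this]
      exact (convex_Icc _ _).linear_preimage _)
    (by simp) (by simp)
  simpa using this

lemma aux_sinh_sub (u : ℂ) : ‖Complex.sinh u - u‖ ≤ ‖u‖ ^ 3 * Real.exp ‖u‖ := by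
  have h1 := Complex.norm_exp_sub_sum_le_norm_mul_exp u 3
  have h2 := Complex.norm_exp_sub_sum_le_norm_mul_exp (-u) 3
  rw [norm_neg] at h2
  have h := (norm_sub_le (Complex.exp u - ∑ m ∈ Finset.range 3, u ^ m / (m.factorial : ℂ))
    (Complex.exp (-u) - ∑ m ∈ Finset.range 3, (-u) ^ m / (m.factorial : ℂ)))
  have e : Complex.sinh u - u = ((Complex.exp u - ∑ m ∈ Finset.range 3, u ^ m / (m.factorial : ℂ)) -
    (Complex.exp (-u) - ∑ m ∈ Finset.range 3, (-u) ^ m / (m.factorial : ℂ))) / 2 := by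
    simp [Finset.sum_range_succ, Complex.sinh]
    ring
  rw [e, norm_div]
  have h3 : ‖(2:ℂ)‖ = 2 := by simp
  rw [h3]
  linarith

lemma aux_inv_sinh (y : ℝ) (hy : 0 < y) : (Real.sinh y)⁻¹ ≤ Real.exp (-y) * (2 + 1 / y) := by
  have hs : 0 < Real.sinh y := Real.sinh_pos_iff.2 hy
  rw [inv_le_iff_one_le_mul₀ hs, Real.sinh_eq]
  have h1 : 2 * y + 1 ≤ Real.exp (2 * y) := Real.add_one_le_exp _
  have h2 : Real.exp (-y) * Real.exp y = 1 := by rw [← Real.exp_add]; simp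
  have h3 : Real.exp (-y) * Real.exp (-y) * Real.exp (2 * y) = 1 := by
    rw [← Real.exp_add, ← Real.exp_add]; ring_nf; simp
  have h4 : 0 < Real.exp (-y) * Real.exp (-y) := by positivity
  have h5 : (Real.exp (-y) * Real.exp (-y)) * (2 * y + 1) ≤ 1 := by
    exact (mul_le_mul_of_nonneg_left h1 h4.le).trans h3.le
  have e : Real.exp (-y) * (2 + 1 / y) * ((Real.exp y - Real.exp (-y)) / 2)
     = (1 - Real.exp (-y) * Real.exp (-y)) * (2 * y + 1) / (2 * y) := by
    rw [← h2]; field_simp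
  rw [e, le_div_iff₀ (by positivity)]
  linarith

lemma aux_self_le_sinh (y : ℝ) (hy : 0 < y) : y ≤ Real.sinh y := (Real.self_lt_sinh_iff.2 hy).le

lemma aux_near (a : ℝ) (ha : 0 < a) (z : ℂ) :
    ∃ C : ℝ, ∀ y ∈ Set.Ioc (0:ℝ) 1, ‖hypInt a z y‖ ≤ C := by
  refine ⟨(‖z‖ * (Real.exp 1 * (Real.exp a * a) + a ^ 3 * Real.exp a)
    + (a * ‖z‖) ^ 3 * Real.exp (a * ‖z‖)) / a, ?_⟩
  rintro y ⟨hy, hy1⟩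
  have hay : 0 < a * y := by positivity
  have hs1 := aux_self_le_sinh y hy
  have hs2 := aux_self_le_sinh (a * y) hay
  have hs1p : 0 < Real.sinh y := by linarith
  have hs2p : 0 < Real.sinh (a * y) := by linarith
  have hy0 : (y:ℂ) ≠ 0 := by exact_mod_cast hy.ne'
  have n1 : Complex.sinh (y:ℂ) ≠ 0 := by rw [← Complex.ofReal_sinh]; exact_mod_cast hs1p.ne'
  have n2 : Complex.sinh ((a:ℂ) * y) ≠ 0 := by
    rw [← Complex.ofReal_mul, ← Complex.ofReal_sinh]; exact_mod_cast hs2p.ne'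
  have e : hypInt a z y = (z * ((Complex.sinh y - y) * Complex.sinh (a * y)
      + y * (Complex.sinh (a * y) - a * y)) - y * (Complex.sinh (a * y * z) - a * y * z)) /
      (y * y * (Complex.sinh y * Complex.sinh (a * y))) := by
    unfold hypInt
    generalize Complex.sinh ((a:ℂ) * y * z) = C at *
    generalize Complex.sinh ((a:ℂ) * y) = B at *
    generalize Complex.sinh (y:ℂ) = A at *
    field_simp
    ring
  have ny : ‖(y:ℂ)‖ = y := by simp [abs_of_pos hy]
  have nay : ‖(a:ℂ) * y‖ = a * y := by simp [abs_of_pos hy, abs_of_pos ha]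
  have nayz : ‖(a:ℂ) * y * z‖ = a * y * ‖z‖ := by rw [norm_mul, nay]
  have b1 : ‖Complex.sinh y - y‖ ≤ y ^ 3 * Real.exp 1 := by
    refine (aux_sinh_sub y).trans ?_
    rw [ny]; gcongr
  have b2 : ‖Complex.sinh (a * y)‖ ≤ Real.exp a * (a * y) := by
    refine (aux_norm_sinh_le _).trans ?_
    rw [nay]
    have : |((a:ℂ) * y).re| ≤ a := by
      simp [abs_of_pos hy, abs_of_pos ha]; nlinarith
    gcongr
  have b3 : ‖Complex.sinh (a * y) - a * y‖ ≤ (a * y) ^ 3 * Real.exp a := by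
    refine (aux_sinh_sub _).trans ?_
    rw [nay]
    have : a * y ≤ a := by nlinarith
    gcongr
  have b4 : ‖Complex.sinh (a * y * z) - a * y * z‖ ≤ (a * y * ‖z‖) ^ 3 * Real.exp (a * ‖z‖) := by
    refine (aux_sinh_sub _).trans ?_
    rw [nayz]
    have : a * y * ‖z‖ ≤ a * ‖z‖ := by
      have : a * y ≤ a := by nlinarith
      gcongr
    gcongr
  have nd : y * y * (y * (a * y)) ≤ ‖(y:ℂ) * y * (Complex.sinh y * Complex.sinh (a * y))‖ := by
    rw [← Complex.ofReal_mul, ← Complex.ofReal_mul, ← Complex.ofReal_sinh, ← Complex.ofReal_sinh,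
      ← Complex.ofReal_mul, ← Complex.ofReal_mul, Complex.norm_real, Real.norm_eq_abs,
      abs_of_pos (by positivity)]
    gcongr
  rw [e, norm_div, div_le_iff₀ (lt_of_lt_of_le (by positivity) nd)]
  refine le_trans ?_ (mul_le_mul_of_nonneg_left nd (by positivity))
  refine (norm_sub_le _ _).trans ?_
  rw [norm_mul, norm_mul (y:ℂ), ny]
  have c1 : ‖(Complex.sinh y - y) * Complex.sinh (a * y) + y * (Complex.sinh (a * y) - a * y)‖
     ≤ (y ^ 3 * Real.exp 1) * (Real.exp a * (a * y)) + y * ((a * y) ^ 3 * Real.exp a) := by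
    refine (norm_add_le _ _).trans ?_
    rw [norm_mul, norm_mul (y:ℂ), ny]
    gcongr
  calc _ ≤ ‖z‖ * ((y ^ 3 * Real.exp 1) * (Real.exp a * (a * y)) + y * ((a * y) ^ 3 * Real.exp a))
        + y * ((a * y * ‖z‖) ^ 3 * Real.exp (a * ‖z‖)) := by gcongr
    _ = _ := by field_simp

lemma aux_meas (a : ℝ) (z : ℂ) : Measurable (hypInt a z) := by
  unfold hypInt
  have h (c : ℂ) : Measurable (fun y : ℝ => Complex.sinh (c * y)) := by
    exact (Complex.continuous_sinh.comp (continuous_const.mul Complex.continuous_ofReal)).measurable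
  have h1 : Measurable (fun y : ℝ => Complex.sinh (y:ℂ)) :=
    (Complex.continuous_sinh.comp Complex.continuous_ofReal).measurable
  have h2 : Measurable (fun y : ℝ => Complex.sinh ((a:ℂ) * y * z)) := by
    have := h (a * z)
    convert this using 3
    ring
  have h3 : Measurable (fun y : ℝ => (y:ℂ)) := Complex.measurable_ofReal
  exact ((measurable_const.div h3).sub (h2.div (h1.mul (h a)))).div h3

lemma aux_int_pos (a : ℝ) (ha : 0 < a) (z : ℂ) (hz : |z.re| < 1 + a⁻¹) :
    IntegrableOn (hypInt a z) (Set.Ioi 0) := by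
  rw [← Set.Ioc_union_Ioi_eq_Ioi (zero_le_one : (0:ℝ) ≤ 1)]
  refine IntegrableOn.union ?_ ?_
  · obtain ⟨C, hC⟩ := aux_near a ha z
    refine Integrable.mono' (g := fun _ => C) (by simp) (aux_meas a z).aestronglyMeasurable ?_
    exact (ae_restrict_iff' measurableSet_Ioc).2 (Filter.Eventually.of_forall hC)
  · have hb : 0 < 1 + a - a * |z.re| := by
      have := mul_lt_mul_of_pos_left hz ha
      rw [mul_add, mul_inv_cancel₀ ha.ne'] at this
      linarith
    have i1 : IntegrableOn (fun y : ℝ => ‖z‖ * y ^ (-2:ℝ)) (Set.Ioi 1) :=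
      (integrableOn_Ioi_rpow_of_lt (by norm_num) one_pos).const_mul _
    have i2 : IntegrableOn (fun y : ℝ => (3 * (2 + 1 / a)) *
        Real.exp (-(1 + a - a * |z.re|) * y)) (Set.Ioi 1) :=
      (exp_neg_integrableOn_Ioi 1 hb).const_mul _
    refine Integrable.mono' (i1.add i2) (aux_meas a z).aestronglyMeasurable ?_
    refine (ae_restrict_iff' measurableSet_Ioi).2 (Filter.Eventually.of_forall ?_)
    intro y hy
    have hy1 : 1 < y := hy
    have hy : 0 < y := by linarith
    have hay : 0 < a * y := by positivity
    have s1 := aux_inv_sinh y hy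
    have s2 := aux_inv_sinh (a * y) hay
    have hs1p : 0 < Real.sinh y := Real.sinh_pos_iff.2 hy
    have hs2p : 0 < Real.sinh (a * y) := Real.sinh_pos_iff.2 hay
    have e : hypInt a z y = z * ((y ^ (-2:ℝ) : ℝ) : ℂ) - Complex.sinh (a * y * z) *
        (((Real.sinh y)⁻¹ * (Real.sinh (a * y))⁻¹ * y⁻¹ : ℝ) : ℂ) := by
      unfold hypInt
      rw [Real.rpow_neg hy.le, Real.rpow_two]
      push_cast
      have hy0 : (y:ℂ) ≠ 0 := by exact_mod_cast hy.ne'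
      generalize Complex.sinh ((a:ℂ) * y * z) = C at *
      generalize Complex.sinh ((a:ℂ) * y) = B at *
      generalize Complex.sinh (y:ℂ) = A at *
      field_simp
    rw [e]
    refine (norm_sub_le _ _).trans ?_
    rw [norm_mul, norm_mul, Complex.norm_real, Complex.norm_real, Real.norm_eq_abs,
      Real.norm_eq_abs, abs_of_pos (by positivity), abs_of_pos (by positivity)]
    simp only [Pi.add_apply]
    refine add_le_add le_rfl ?_
    have t1 : (Real.sinh y)⁻¹ ≤ Real.exp (-y) * 3 := by
      refine s1.trans ?_
      have : 1 / y ≤ 1 := by rw [div_le_one hy]; exact hy1.le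
      gcongr; linarith
    have t2 : (Real.sinh (a * y))⁻¹ ≤ Real.exp (-(a * y)) * (2 + 1 / a) := by
      refine s2.trans ?_
      have : 1 / (a * y) ≤ 1 / a := by
        apply one_div_le_one_div_of_le ha; nlinarith
      gcongr
    have t3 : y⁻¹ ≤ 1 := inv_le_one_of_one_le₀ hy1.le
    have t4 : ‖Complex.sinh (a * y * z)‖ ≤ Real.exp (a * y * |z.re|) := by
      refine (aux_norm_sinh_le_exp _).trans ?_
      rw [← Complex.ofReal_mul, Complex.re_ofReal_mul, abs_mul, abs_of_pos hay]
    calc _ ≤ Real.exp (a * y * |z.re|) * ((Real.exp (-y) * 3) * (Real.exp (-(a * y)) * (2 + 1 / a)) * 1) := by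
          gcongr
      _ = 3 * (2 + 1 / a) * (Real.exp (a * y * |z.re|) * Real.exp (-y) * Real.exp (-(a * y))) := by ring
      _ = _ := by
          rw [← Real.exp_add, ← Real.exp_add]
          ring_nf

lemma aux_int (τ : ℝ) (hτ : τ < 0) (z : ℂ) (hz : |z.re| < 1 - τ⁻¹) :
    IntegrableOn (hypInt τ z) (Set.Ioi 0) := by
  have : hypInt τ z = hypInt (-τ) z := by
    ext y
    unfold hypInt
    simp [Complex.sinh_neg, neg_mul]
  rw [this]
  refine aux_int_pos _ (by linarith) z ?_
  rw [inv_neg]; linarith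

/-- Reduced integrand. -/
def auxK (w : ℂ) (y : ℝ) : ℂ := (1 / (y:ℂ) - Complex.cosh (w * y) / Complex.sinh y) / y

lemma aux_sinh_ne (y : ℝ) (hy : 0 < y) : Complex.sinh (y:ℂ) ≠ 0 := by
  rw [← Complex.ofReal_sinh]; exact_mod_cast (Real.sinh_pos_iff.2 hy).ne'

lemma aux_diff (τ : ℝ) (hτ : τ ≠ 0) (z : ℂ) (y : ℝ) (hy : 0 < y) :
    hypInt τ (z + 2) y - hypInt τ z y = 2 * auxK (τ * (z + 1)) y := by
  have n1 := aux_sinh_ne y hy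
  have hy0 : (y:ℂ) ≠ 0 := by exact_mod_cast hy.ne'
  have n2 : Complex.sinh ((τ:ℂ) * y) ≠ 0 := by
    rw [← Complex.ofReal_mul, ← Complex.ofReal_sinh]
    have : τ * y ≠ 0 := mul_ne_zero hτ hy.ne'
    exact_mod_cast (Real.sinh_eq_zero.not.2 this)
  unfold hypInt auxK
  have e1 : (τ:ℂ) * y * (z + 2) = τ * (z + 1) * y + τ * y := by ring
  have e2 : (τ:ℂ) * y * z = τ * (z + 1) * y - τ * y := by ring
  rw [e1, e2, Complex.sinh_add, Complex.sinh_sub]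
  generalize Complex.sinh ((τ:ℂ) * (z + 1) * y) = C at *
  generalize Complex.cosh ((τ:ℂ) * (z + 1) * y) = D at *
  generalize Complex.sinh ((τ:ℂ) * y) = B at *
  generalize Complex.sinh (y:ℂ) = A at *
  field_simp
  ring

lemma aux_K_int (w : ℂ) (hw : |w.re| < 1) : IntegrableOn (auxK w) (Set.Ioi 0) := by
  have hw' := abs_lt.1 hw
  have h1 := aux_int_pos 1 one_pos (w - 1 + 2) (by
    simp; rw [abs_lt]; constructor <;> linarith)
  have h2 := aux_int_pos 1 one_pos (w - 1) (by
    simp; rw [abs_lt]; constructor <;> linarith)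
  have h3 : IntegrableOn (fun y => (1/2 : ℂ) * (hypInt 1 (w - 1 + 2) y - hypInt 1 (w - 1) y)) (Set.Ioi 0) :=
    (Integrable.sub h1 h2).const_mul (1/2 : ℂ)
  refine IntegrableOn.congr_fun h3 (fun y hy => ?_) measurableSet_Ioi
  have := aux_diff 1 one_ne_zero (w - 1) y hy
  simp only [this]
  simp

/-- Derivative integrand. -/
def auxS (w : ℂ) (y : ℝ) : ℂ := Complex.sinh (w * y) / Complex.sinh y

lemma aux_S_meas (w : ℂ) : Measurable (auxS w) := by
  unfold auxS
  exact (Complex.continuous_sinh.comp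
    (continuous_const.mul Complex.continuous_ofReal)).measurable.div
    (Complex.continuous_sinh.comp Complex.continuous_ofReal).measurable

lemma aux_S_bound (r R : ℝ) (v : ℂ) (hv : |v.re| < r) (hv2 : ‖v‖ < R) (y : ℝ) (hy : 0 < y) :
    ‖auxS v y‖ ≤ R * (2 * (y ^ (1:ℝ) * Real.exp (-(1 - r) * y ^ (1:ℝ))) +
      Real.exp (-(1 - r) * y)) := by
  unfold auxS
  have hs := Real.sinh_pos_iff.2 hy
  have h1 := aux_norm_sinh_le (v * y)
  have e1 : |(v * (y:ℂ)).re| = |v.re| * y := by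
    rw [Complex.re_mul_ofReal, abs_mul, abs_of_pos hy]
  have e2 : ‖v * (y:ℂ)‖ = ‖v‖ * y := by simp [abs_of_pos hy]
  rw [e1, e2] at h1
  rw [norm_div, ← Complex.ofReal_sinh, Complex.norm_real, Real.norm_eq_abs, abs_of_pos hs,
    div_eq_mul_inv, Real.rpow_one]
  have hR : 0 ≤ R := (norm_nonneg v).trans hv2.le
  calc _ ≤ (Real.exp (r * y) * (R * y)) * (Real.exp (-y) * (2 + 1 / y)) := by
        refine mul_le_mul (h1.trans ?_) (aux_inv_sinh y hy) (by positivity) (by positivity)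
        gcongr
    _ = R * (2 * y + 1) * (Real.exp (r * y) * Real.exp (-y)) := by field_simp
    _ = _ := by
        rw [← Real.exp_add]
        have : r * y + -y = -(1 - r) * y := by ring
        rw [this]; ring

lemma aux_bound_int (r R : ℝ) (hr : r < 1) : IntegrableOn (fun y : ℝ =>
    R * (2 * (y ^ (1:ℝ) * Real.exp (-(1 - r) * y ^ (1:ℝ))) + Real.exp (-(1 - r) * y)))
    (Set.Ioi 0) := by
  have h1 := integrableOn_rpow_mul_exp_neg_mul_rpow (p := 1) (s := 1) (b := 1 - r) (by norm_num)
    one_pos (by linarith)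
  have h2 := exp_neg_integrableOn_Ioi 0 (b := 1 - r) (by linarith)
  exact ((h1.const_mul 2).add h2).const_mul R

lemma aux_deriv (w : ℂ) (hw : |w.re| < 1) :
    IntegrableOn (auxS w) (Set.Ioi 0) ∧
    HasDerivAt (fun v => ∫ y in Set.Ioi (0:ℝ), auxK v y) (-∫ y in Set.Ioi (0:ℝ), auxS w y) w := by
  set r := (1 + |w.re|) / 2 with hr
  set R := ‖w‖ + 1 with hR
  have hr1 : r < 1 := by linarith
  have hopen : IsOpen {v : ℂ | |v.re| < r ∧ ‖v‖ < R} :=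
    (isOpen_lt (Complex.continuous_re.abs) continuous_const).inter
      (isOpen_lt continuous_norm continuous_const)
  have hmem : {v : ℂ | |v.re| < r ∧ ‖v‖ < R} ∈ nhds w :=
    hopen.mem_nhds ⟨by linarith, by linarith⟩
  have hstrip : ∀ᶠ v in nhds w, |v.re| < 1 :=
    (isOpen_lt (Complex.continuous_re.abs) continuous_const).mem_nhds hw
  have key := hasDerivAt_integral_of_dominated_loc_of_deriv_le (𝕜 := ℂ)
    (μ := volume.restrict (Set.Ioi (0:ℝ))) (F := auxK) (F' := fun v y => - auxS v y) hmem
    (hstrip.mono fun v hv => (aux_K_int v hv).aestronglyMeasurable)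
    (aux_K_int w hw) (aux_S_meas w).neg.aestronglyMeasurable
    ((ae_restrict_iff' measurableSet_Ioi).2 (Filter.Eventually.of_forall
      (fun y hy v hv => by rw [norm_neg]; exact aux_S_bound r R v hv.1 hv.2 y hy)))
    (aux_bound_int r R hr1)
    ((ae_restrict_iff' measurableSet_Ioi).2 (Filter.Eventually.of_forall
      (fun y hy v hv => by
        have hy0 : (y:ℂ) ≠ 0 := by
          have : (0:ℝ) < y := hy
          exact_mod_cast this.ne'
        have h1 : HasDerivAt (fun v : ℂ => v * (y:ℂ)) (y:ℂ) v := by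
          simpa using (hasDerivAt_id v).mul_const (y:ℂ)
        have h2 := (((h1.ccosh).div_const (Complex.sinh y)).const_sub (1 / (y:ℂ))).div_const (y:ℂ)
        unfold auxK auxS
        refine h2.congr_deriv ?_
        rw [neg_div, mul_div_right_comm, mul_div_cancel_right₀ _ hy0])))
  refine ⟨by have h := key.1.neg; simp at h; exact h, ?_⟩
  have := key.2
  rwa [integral_neg] at this

lemma aux_step (w : ℂ) (y : ℝ) (hy : 0 < y) (n : ℕ) :
    Complex.exp (-2 * n * y) * auxS w y = (Complex.exp ((w - (2 * n + 1)) * y)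
      - Complex.exp ((-w - (2 * n + 1)) * y)) + Complex.exp (-2 * (n + 1 : ℕ) * y) * auxS w y := by
  have n1 := aux_sinh_ne y hy
  have e1 : Complex.exp ((w - (2 * n + 1)) * y) =
      Complex.exp (-2 * n * y) * Complex.exp (-y) * Complex.exp (w * y) := by
    rw [← Complex.exp_add, ← Complex.exp_add]; ring_nf
  have e2 : Complex.exp ((-w - (2 * n + 1)) * y) =
      Complex.exp (-2 * n * y) * Complex.exp (-y) * Complex.exp (-(w * y)) := by
    rw [← Complex.exp_add, ← Complex.exp_add]; ring_nf
  have e3 : Complex.exp (-2 * (n + 1 : ℕ) * y) =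
      Complex.exp (-2 * n * y) * Complex.exp (-y) * Complex.exp (-y) := by
    rw [← Complex.exp_add, ← Complex.exp_add]; push_cast; ring_nf
  have e4 : Complex.exp (-y) * Complex.exp y = 1 := by rw [← Complex.exp_add]; simp
  have e5 : 2 * Complex.exp (-y) * Complex.sinh y = 1 - Complex.exp (-y) * Complex.exp (-y) := by
    rw [← e4, Complex.sinh]; ring
  have e6 : Complex.exp (w * y) - Complex.exp (-(w * y)) = 2 * Complex.sinh (w * y) := by
    rw [Complex.sinh]; ring
  rw [e1, e2, e3, ← mul_sub, e6]
  unfold auxS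
  have : Complex.exp (-2 * n * y) * Complex.exp (-y) * (2 * Complex.sinh (w * y)) =
    Complex.exp (-2 * n * y) * (2 * Complex.exp (-y) * Complex.sinh y) *
      (Complex.sinh (w * y) / Complex.sinh y) := by
    field_simp
  rw [this, e5]
  ring

lemma aux_weight_norm (n : ℕ) (y : ℝ) (hy : 0 < y) : ‖Complex.exp (-2 * n * y)‖ ≤ 1 := by
  have : (-2 * n * y : ℂ) = ((-2 * n * y : ℝ) : ℂ) := by push_cast; ring
  rw [this, Complex.norm_exp, Complex.ofReal_re, Real.exp_le_one_iff]
  have : 0 ≤ (n:ℝ) * y := by positivity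
  nlinarith

lemma aux_weight_meas (n : ℕ) (w : ℂ) :
    Measurable (fun y : ℝ => Complex.exp (-2 * n * y) * auxS w y) :=
  ((Complex.continuous_exp.comp
    (continuous_const.mul Complex.continuous_ofReal)).measurable).mul (aux_S_meas w)

lemma aux_weight_bound (n : ℕ) (w : ℂ) : ∀ᵐ (y : ℝ) ∂(volume.restrict (Set.Ioi (0:ℝ))),
    ‖Complex.exp (-2 * n * y) * auxS w y‖ ≤ ‖auxS w y‖ := by
  refine (ae_restrict_iff' measurableSet_Ioi).2 (Filter.Eventually.of_forall fun y hy => ?_)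
  rw [norm_mul]
  exact mul_le_of_le_one_left (norm_nonneg _) (aux_weight_norm n y hy)

lemma aux_weight_int (n : ℕ) (w : ℂ) (hw : |w.re| < 1) :
    IntegrableOn (fun y : ℝ => Complex.exp (-2 * n * y) * auxS w y) (Set.Ioi 0) :=
  Integrable.mono' (aux_deriv w hw).1.norm (aux_weight_meas n w).aestronglyMeasurable
    (aux_weight_bound n w)

lemma aux_I_step (n : ℕ) (w : ℂ) (hw : |w.re| < 1) :
    ∫ y in Set.Ioi (0:ℝ), Complex.exp (-2 * n * y) * auxS w y =
    (1 / (2 * n + 1 - w) - 1 / (2 * n + 1 + w)) +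
      ∫ y in Set.Ioi (0:ℝ), Complex.exp (-2 * (n + 1 : ℕ) * y) * auxS w y := by
  have hw' := abs_lt.1 hw
  have hn : (0:ℝ) ≤ n := n.cast_nonneg
  have r1 : (w - (2 * n + 1)).re < 0 := by simp; linarith
  have r2 : (-w - (2 * n + 1)).re < 0 := by simp; linarith
  have i1 := integrableOn_exp_mul_complex_Ioi r1 0
  have i2 := integrableOn_exp_mul_complex_Ioi r2 0
  rw [setIntegral_congr_fun measurableSet_Ioi (fun y hy => aux_step w y hy n)]
  have i3 : IntegrableOn (fun y : ℝ => Complex.exp ((w - (2 * n + 1)) * y)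
      - Complex.exp ((-w - (2 * n + 1)) * y)) (Set.Ioi 0) := Integrable.sub i1 i2
  rw [integral_add i3 (aux_weight_int (n + 1) w hw), integral_sub i1 i2,
    integral_exp_mul_complex_Ioi r1, integral_exp_mul_complex_Ioi r2]
  congr 1
  have d1 : w - (2 * n + 1) ≠ 0 := by intro h; rw [h] at r1; simp at r1
  have d2 : -w - (2 * n + 1) ≠ 0 := by intro h; rw [h] at r2; simp at r2
  have f1 : (2 * n + 1 - w) = -(w - (2 * n + 1)) := by ring
  have f2 : (2 * n + 1 + w) = -(-w - (2 * n + 1)) := by ring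
  rw [f1, f2, Complex.ofReal_zero, mul_zero, mul_zero, Complex.exp_zero, div_neg, div_neg, neg_div,
    neg_div]

lemma aux_I_sum (w : ℂ) (hw : |w.re| < 1) (N : ℕ) :
    ∫ y in Set.Ioi (0:ℝ), auxS w y =
    ∑ n ∈ Finset.range N, (1 / (2 * n + 1 - w) - 1 / (2 * n + 1 + w)) +
      ∫ y in Set.Ioi (0:ℝ), Complex.exp (-2 * (N : ℕ) * y) * auxS w y := by
  induction N with
  | zero => simp
  | succ N ih => rw [ih, aux_I_step N w hw, Finset.sum_range_succ]; ring

lemma aux_I_lim (w : ℂ) (hw : |w.re| < 1) : Filter.Tendsto (fun N : ℕ =>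
    ∫ y in Set.Ioi (0:ℝ), Complex.exp (-2 * (N : ℕ) * y) * auxS w y) Filter.atTop (nhds 0) := by
  have := tendsto_integral_of_dominated_convergence (μ := volume.restrict (Set.Ioi (0:ℝ)))
    (F := fun (N : ℕ) (y : ℝ) => Complex.exp (-2 * (N : ℕ) * y) * auxS w y) (f := fun _ => 0)
    (fun y => ‖auxS w y‖) (fun n => (aux_weight_meas n w).aestronglyMeasurable)
    (aux_deriv w hw).1.norm (fun n => aux_weight_bound n w)
    ((ae_restrict_iff' measurableSet_Ioi).2 (Filter.Eventually.of_forall fun y hy => by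
      have hy' : (0:ℝ) < y := hy
      have h : Filter.Tendsto (fun N : ℕ => (Complex.exp (-2 * y)) ^ N) Filter.atTop (nhds 0) := by
        apply tendsto_pow_atTop_nhds_zero_of_norm_lt_one
        rw [Complex.norm_exp, Real.exp_lt_one_iff]
        simp
        exact hy'
      have h2 := h.mul_const (auxS w y)
      rw [zero_mul] at h2
      refine h2.congr fun N => ?_
      rw [← Complex.exp_nat_mul]
      ring_nf))
  simpa using this

lemma aux_sum_lim (w : ℂ) (hw : |w.re| < 1) : Filter.Tendsto (fun N : ℕ =>
    ∑ n ∈ Finset.range N, (1 / (2 * (n:ℂ) + 1 - w) - 1 / (2 * n + 1 + w))) Filter.atTop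
    (nhds (Real.pi / 2 * Complex.cot (Real.pi * ((1 - w) / 2)))) := by
  have hw' := abs_lt.1 hw
  set s := (1 - w) / 2 with hs
  have hsre : s.re = (1 - w.re) / 2 := by
    rw [hs]; simp
  have hsI : s ∈ Complex.integerComplement := by
    rw [Complex.mem_integerComplement_iff]
    rintro ⟨n, hn⟩
    have : (n:ℝ) = (1 - w.re) / 2 := by rw [← hsre, ← hn]; simp
    have h1 : (0:ℝ) < n := by linarith
    have h2 : (n:ℝ) < 1 := by linarith
    have h1' : 0 < n := by exact_mod_cast h1
    have h2' : n < 1 := by exact_mod_cast h2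
    omega
  have h := tendsto_logDeriv_euler_cot_sub hsI
  have h0 : Filter.Tendsto (fun N : ℕ => 1 / (s + N)) Filter.atTop (nhds 0) := by
    refine squeeze_zero_norm' ?_ tendsto_one_div_atTop_nhds_zero_nat
    filter_upwards [Filter.eventually_ge_atTop 1] with N hN
    have hN' : (0:ℝ) < N := by exact_mod_cast hN
    rw [norm_div, norm_one]
    apply one_div_le_one_div_of_le hN'
    have := (le_abs_self _).trans (Complex.abs_re_le_norm (s + N))
    simp only [Complex.add_re, Complex.natCast_re] at this
    linarith
  have hlim := ((h.add_const (1 / s)).sub h0).const_mul (1/2 : ℂ)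
  have e : 1 / 2 * (Real.pi * Complex.cot (Real.pi * s) - 1 / s + 1 / s - 0) =
    Real.pi / 2 * Complex.cot (Real.pi * s) := by ring
  rw [e] at hlim
  refine hlim.congr fun N => ?_
  induction N with
  | zero => simp
  | succ N ih =>
    rw [Finset.sum_range_succ, Finset.sum_range_succ, ← ih]
    have f1 : 2 * (N:ℂ) + 1 - w = 2 * (s + N) := by rw [hs]; ring
    have f2 : 2 * (N:ℂ) + 1 + w = 2 * (-(s - (N + 1))) := by rw [hs]; ring
    rw [f1, f2]
    simp only [cotTerm, one_div, mul_inv, inv_neg]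
    push_cast
    ring

lemma aux_J (w : ℂ) (hw : |w.re| < 1) : ∫ y in Set.Ioi (0:ℝ), auxS w y =
    Real.pi / 2 * Complex.cot (Real.pi * ((1 - w) / 2)) := by
  have h := (aux_sum_lim w hw).add (aux_I_lim w hw)
  rw [add_zero] at h
  refine tendsto_nhds_unique ?_ h
  refine tendsto_const_nhds.congr fun N => ?_
  exact aux_I_sum w hw N

lemma aux_cos_ne (w : ℂ) (hw : |w.re| < 1) : Complex.cos (Real.pi * w / 2) ≠ 0 := by
  have hw' := abs_lt.1 hw
  rw [Complex.cos_ne_zero_iff]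
  intro k hk
  have hpi : (Real.pi : ℂ) ≠ 0 := by exact_mod_cast Real.pi_ne_zero
  have : w = 2 * k + 1 := by
    field_simp at hk
    exact hk
  have h : w.re = 2 * k + 1 := by rw [this]; simp
  have h1 : (-1:ℝ) < 2 * k + 1 := by linarith
  have h2 : (2 * k + 1 : ℝ) < 1 := by linarith
  have h1' : -1 < 2 * k + 1 := by exact_mod_cast h1
  have h2' : 2 * k + 1 < 1 := by exact_mod_cast h2
  omega

lemma aux_P_deriv (w : ℂ) (hw : |w.re| < 1) :
    HasDerivAt (fun v => Complex.exp (-∫ y in Set.Ioi (0:ℝ), auxK v y) *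
      Complex.cos (Real.pi * v / 2)) 0 w := by
  have h1 := (aux_deriv w hw).2.neg.cexp
  have h2 : HasDerivAt (fun v : ℂ => (Real.pi:ℂ) * v / 2) (Real.pi / 2) w := by
    simpa using ((hasDerivAt_id w).const_mul (Real.pi:ℂ)).div_const 2
  have h3 := h1.mul h2.ccos
  refine h3.congr_deriv ?_
  rw [aux_J w hw]
  have e : (Real.pi:ℂ) * ((1 - w) / 2) = Real.pi / 2 - Real.pi * w / 2 := by ring
  rw [e, Complex.cot_eq_cos_div_sin, Complex.cos_pi_div_two_sub, Complex.sin_pi_div_two_sub]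
  have := aux_cos_ne w hw
  simp only [Pi.neg_apply]
  field_simp
  ring

lemma aux_P_const (w : ℂ) (hw : |w.re| < 1) :
    Complex.exp (-∫ y in Set.Ioi (0:ℝ), auxK w y) * Complex.cos (Real.pi * w / 2) =
    Complex.exp (-∫ y in Set.Ioi (0:ℝ), auxK 0 y) := by
  have hopen : IsOpen {v : ℂ | |v.re| < 1} :=
    isOpen_lt (Complex.continuous_re.abs) continuous_const
  have hconv : Convex ℝ {v : ℂ | |v.re| < 1} := by
    have : {v : ℂ | |v.re| < 1} = Complex.reLm ⁻¹' (Set.Ioo (-1) 1) := by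
      ext v; simp [abs_lt]
    rw [this]
    exact (convex_Ioo _ _).linear_preimage _
  have := hopen.is_const_of_deriv_eq_zero (𝕜 := ℂ) hconv.isPreconnected
    (fun v hv => (aux_P_deriv v hv).differentiableAt.differentiableWithinAt)
    (fun v hv => (aux_P_deriv v hv).deriv) (x := w) (y := 0) hw (by simp)
  simpa using this

lemma aux_dup : ∫ y in Set.Ioi (0:ℝ), auxK 0 y = 2 * ∫ y in Set.Ioi (0:ℝ), auxK (1/2) y := by
  have h := integral_comp_mul_left_Ioi (auxK (1/2)) 0 (b := 2) two_pos
  rw [mul_zero] at h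
  have h2 : ∫ y in Set.Ioi (0:ℝ), auxK 0 y = ∫ y in Set.Ioi (0:ℝ), 4 * auxK (1/2) (2 * y) := by
    refine setIntegral_congr_fun measurableSet_Ioi fun y hy => ?_
    have n1 := aux_sinh_ne y hy
    have n2 : Complex.cosh (y:ℂ) ≠ 0 := by
      rw [← Complex.ofReal_cosh]; exact_mod_cast (Real.cosh_pos y).ne'
    have hy0 : (y:ℂ) ≠ 0 := by
      have : (0:ℝ) < y := hy
      exact_mod_cast this.ne'
    unfold auxK
    push_cast
    have e : (1/2 : ℂ) * (2 * y) = y := by ring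
    simp only [e, Complex.sinh_two_mul, zero_mul, Complex.cosh_zero]
    generalize Complex.sinh (y:ℂ) = A at *
    generalize Complex.cosh (y:ℂ) = B at *
    field_simp
    try ring
  rw [h2, integral_const_mul, h, Complex.real_smul]
  push_cast
  ring

lemma aux_half : Complex.exp (-∫ y in Set.Ioi (0:ℝ), auxK 0 y) = 1 / 2 := by
  have h := aux_P_const (1/2) (by norm_num)
  rw [aux_dup] at h ⊢
  set E := ∫ y in Set.Ioi (0:ℝ), auxK (1/2) y
  have e : Complex.exp (-(2 * E)) = Complex.exp (-E) * Complex.exp (-E) := by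
    rw [← Complex.exp_add]; ring_nf
  have c : Complex.cos (Real.pi * (1/2) / 2) * Complex.cos (Real.pi * (1/2) / 2) = 1 / 2 := by
    have e1 : (Real.pi * (1/2) / 2 : ℂ) = ((Real.pi / 4 : ℝ) : ℂ) := by push_cast; ring
    rw [e1, ← Complex.ofReal_cos, Real.cos_pi_div_four, ← Complex.ofReal_mul]
    have : √2 / 2 * (√2 / 2) = (1:ℝ) / 2 := by
      have := Real.mul_self_sqrt (show (0:ℝ) ≤ 2 by norm_num)
      linarith
    rw [this]; push_cast; rfl
  rw [e] at h ⊢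
  have hne := Complex.exp_ne_zero (-E)
  generalize Complex.exp (-E) = X at *
  have h' := mul_left_cancel₀ hne h
  rw [← h', c]

lemma aux_main (w : ℂ) (hw : |w.re| < 1) :
    Complex.exp (∫ y in Set.Ioi (0:ℝ), auxK w y) = 2 * Complex.cos (Real.pi * w / 2) := by
  have h := aux_P_const w hw
  rw [aux_half, Complex.exp_neg] at h
  have hne := Complex.exp_ne_zero (∫ y in Set.Ioi (0:ℝ), auxK w y)
  field_simp at h
  linear_combination -h

/-- The hyperbolic gamma function satisfies the first order difference equation
`G_τ(z+2) = 2·cos(π(z+1)τ/2)·G_τ(z)` on the strip. -/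
theorem hyperbolic_gamma_difference_equation (τ : ℝ) (hτ : τ < 0) (z : ℂ)
    (hz : |z.re| < 1 - τ⁻¹) (hz2 : |(z + 2).re| < 1 - τ⁻¹) :
    hypGammaStrip τ (z + 2) =
      2 * Complex.cos ((Real.pi : ℂ) * (z + 1) * (τ : ℂ) / 2) * hypGammaStrip τ z := by
  have hw : |((τ:ℂ) * (z + 1)).re| < 1 := by
    have hz' := abs_lt.1 hz
    have hz2' := abs_lt.1 hz2
    simp only [Complex.add_re, Complex.re_ofNat] at hz2'
    rw [Complex.re_ofReal_mul, Complex.add_re, Complex.one_re]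
    have hi : τ * τ⁻¹ = 1 := mul_inv_cancel₀ hτ.ne
    rw [abs_lt]
    constructor <;> nlinarith
  have hd : ∫ y in Set.Ioi (0:ℝ), hypInt τ (z + 2) y =
      2 * (∫ y in Set.Ioi (0:ℝ), auxK (τ * (z + 1)) y) + ∫ y in Set.Ioi (0:ℝ), hypInt τ z y := by
    rw [← sub_eq_iff_eq_add, ← integral_sub (aux_int τ hτ _ hz2) (aux_int τ hτ _ hz),
      ← integral_const_mul]
    exact setIntegral_congr_fun measurableSet_Ioi fun y hy => aux_diff τ hτ.ne z y hy
  unfold hypGammaStrip hypGammaArg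
  have e : (Real.pi : ℂ) * (z + 1) * (τ : ℂ) / 2 = Real.pi * (τ * (z + 1)) / 2 := by ring
  rw [hd, e, ← aux_main _ hw, ← Complex.exp_add]
  congr 1
  have hI := Complex.I_ne_zero
  field_simp
end
end

section
/- Let τ ∈ ℝ_{<0}. The function γ_τ(z) has an analytic continuation to the cut plane ℂ \ { (−∞, −1+τ^{-1}] ∪ [1−τ^{-1}, ∞) }, again denoted γ_τ(z), and with r = max(1, −τ^{-1}) the following asymptotics hold: for every ε > 0, | ∓γ_τ(z) + πτz²/8 − (π/24)(τ + τ^{-1}) | = O( exp( (ε − π/r)·|Im(z)| ) ) as Im(z) → ±∞, uniformly for Re(z) in compact subsets of ℝ. -/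
noncomputable section

open Complex MeasureTheory Set

/-- The cut plane `ℂ \ { (−∞, −1+τ⁻¹] ∪ [1−τ⁻¹, ∞) }`. -/
def hypCutPlane (τ : ℝ) : Set ℂ :=
  {z : ℂ | ¬ (z.im = 0 ∧ (z.re ≤ -1 + τ⁻¹ ∨ 1 - τ⁻¹ ≤ z.re))}

open Filter Topology

lemma hg_exists_Q : ∃ Q : ℂ → ℂ, Differentiable ℂ Q ∧
    ∀ w, exp w = 1 + w + w ^ 2 / 2 + w ^ 3 / 6 + w ^ 4 * Q w := by
  set f : ℂ → ℂ := fun w => (exp w - (1 + w + w ^ 2 / 2 + w ^ 3 / 6)) / w ^ 4 with hf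
  have hd : DifferentiableOn ℂ f (univ \ {0}) := by
    intro w hw
    have hw0 : w ≠ 0 := by simpa using hw
    apply DifferentiableAt.differentiableWithinAt
    rw [hf]
    have : w ^ 4 ≠ 0 := pow_ne_zero _ hw0
    fun_prop (disch := assumption)
  have hb : BddAbove (norm ∘ f '' (Metric.ball 0 1 \ {0})) := by
    refine ⟨(5 : ℝ) * (24 * 4)⁻¹, ?_⟩
    rintro _ ⟨w, ⟨hw1, hw0⟩, rfl⟩
    have hw0 : w ≠ 0 := by simpa using hw0
    have hw1 : ‖w‖ ≤ 1 := by
      have := hw1; simp at this; exact this.le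
    have := Complex.exp_bound hw1 (n := 4) (by norm_num)
    simp only [Finset.sum_range_succ, Finset.sum_range_zero, Nat.factorial] at this
    norm_num at this
    simp only [Function.comp, hf, norm_div, norm_pow]
    rw [div_le_iff₀ (by positivity)]
    norm_num
    linarith
  have hdb : DifferentiableOn ℂ f (Metric.ball 0 1 \ {0}) := hd.mono (by intro x hx; exact ⟨trivial, hx.2⟩)
  have h1 := Complex.differentiableOn_update_limUnder_of_bddAbove (Metric.ball_mem_nhds (0:ℂ) one_pos) hdb hb
  refine ⟨Function.update f 0 (limUnder (nhdsWithin 0 {0}ᶜ) f), ?_, ?_⟩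
  · intro w
    by_cases hw : w = 0
    · subst hw
      exact h1.differentiableAt (Metric.ball_mem_nhds (0:ℂ) one_pos)
    · have h2 : DifferentiableAt ℂ f w := hd.differentiableAt (by
        rw [← Set.compl_eq_univ_sdiff]
        exact isOpen_compl_singleton.mem_nhds hw)
      refine h2.congr_of_eventuallyEq ?_
      filter_upwards [isOpen_compl_singleton.mem_nhds hw] with y hy
      exact Function.update_of_ne hy _ _
  · intro w
    by_cases hw : w = 0
    · subst hw; simp
    · rw [Function.update_of_ne hw, hf]
      field_simp
      ring

lemma hg_exists_W (t : ℝ) (ht : 0 < t) (z : ℂ) : ∃ W : ℂ → ℂ,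
    (∀ y : ℂ, y ≠ 0 → sinh y ≠ 0 → sinh (t * y) ≠ 0 →
      W y = exp (t * y * z) / (y * sinh y * sinh (t * y)) - 1 / (t * y ^ 3) - z / y ^ 2
        - (t * z ^ 2 / 2 - (t + (t : ℂ)⁻¹) / 6) / y) ∧
    (∀ y : ℂ, (y = 0 ∨ (sinh y ≠ 0 ∧ sinh (t * y) ≠ 0)) → DifferentiableAt ℂ W y) := by
  obtain ⟨Q, hQ, hQe⟩ := hg_exists_Q
  have htc : (t : ℂ) ≠ 0 := by exact_mod_cast ht.ne'
  set B : ℂ → ℂ := fun y => (Q y - Q (-y)) / 2 with hB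
  set sh : ℂ → ℂ := fun y => 1 + y ^ 2 / 6 + y ^ 3 * B y with hsh
  have hBd : Differentiable ℂ B := by rw [hB]; fun_prop
  have hshd : Differentiable ℂ sh := by rw [hsh]; fun_prop
  have hsinh : ∀ y, sinh y = y * sh y := by
    intro y
    rw [Complex.sinh, hQe y, hQe (-y)]
    simp only [hsh, hB]
    ring
  set r : ℂ := t * z ^ 2 / 2 - (t + (t : ℂ)⁻¹) / 6 with hr
  set M : ℂ → ℂ := fun y => t ^ 3 * z ^ 3 * (1 / 6 + (t * y * z) * Q (t * y * z))
    - (1 + t ^ 2) / 6 * (t * z + t * r * y)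
    - (B y + t ^ 3 * B (t * y) + y * (1 / 6 + y * B y) * (t ^ 2 / 6 + t ^ 3 * y * B (t * y)))
      * (1 + t * z * y + t * r * y ^ 2) with hM
  have hMd : Differentiable ℂ M := by rw [hM]; fun_prop
  have key : ∀ y, exp (t * y * z) - sh y * sh (t * y) * (1 + t * z * y + t * r * y ^ 2) = y ^ 3 * M y := by
    intro y
    have h0 : (t : ℂ) ^ 2 * z ^ 2 / 2 - (1 + t ^ 2) / 6 - t * r = 0 := by
      rw [hr]; field_simp; ring
    rw [hQe]
    simp only [hM, hsh]
    linear_combination (y ^ 2) * h0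
  refine ⟨fun y => M y / (t * sh y * sh (t * y)), ?_, ?_⟩
  · intro y hy h1 h2
    rw [hsinh] at h1 h2
    have h1' : sh y ≠ 0 := right_ne_zero_of_mul h1
    have h2' : sh (t * y) ≠ 0 := right_ne_zero_of_mul h2
    rw [hsinh, hsinh]
    simp only
    have := key y
    have e1 : M y = (exp (t * y * z) - sh y * sh (t * y) * (1 + t * z * y + t * r * y ^ 2)) / y ^ 3 := by
      rw [this]; field_simp
    rw [e1]
    generalize exp (t * y * z) = E
    clear_value r sh
    field_simp
    ring
  · intro y hy
    have : (t : ℂ) * sh y * sh (t * y) ≠ 0 := by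
      rcases hy with rfl | ⟨h1, h2⟩
      · simp [hsh, htc]
      · rw [hsinh] at h1 h2
        exact mul_ne_zero (mul_ne_zero htc (right_ne_zero_of_mul h1)) (right_ne_zero_of_mul h2)
    fun_prop (disch := assumption)

lemma hg_norm_sinh_ge (y : ℂ) : (Real.exp |y.re| - Real.exp (-|y.re|)) / 2 ≤ ‖sinh y‖ := by
  have h1 : ‖exp y‖ = Real.exp y.re := Complex.norm_exp y
  have h2 : ‖exp (-y)‖ = Real.exp (-y.re) := by rw [Complex.norm_exp]; simp
  have h3 : ‖sinh y‖ = ‖exp y - exp (-y)‖ / 2 := by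
    rw [Complex.sinh]; simp
  rw [h3]
  rcases abs_cases y.re with ⟨h, _⟩ | ⟨h, _⟩
  · rw [h, ← h1, ← h2]
    have := norm_sub_norm_le (exp y) (exp (-y))
    linarith
  · rw [h, neg_neg, ← h1, ← h2]
    have := norm_sub_norm_le (exp (-y)) (exp y)
    rw [norm_sub_rev] at this
    linarith

lemma hg_norm_sinh_ge' (y : ℂ) (h : 1 ≤ |y.re|) : Real.exp |y.re| / 4 ≤ ‖sinh y‖ := by
  have h1 := hg_norm_sinh_ge y
  have h2 := Real.add_one_le_exp |y.re|
  have h3 : Real.exp (-|y.re|) ≤ 1 / 2 := by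
    rw [Real.exp_neg, inv_le_comm₀ (by positivity) (by norm_num)]
    linarith
  linarith

lemma hg_sinh_ne (y : ℂ) (h : y.re ≠ 0 ∨ (0 < y.im ∧ y.im < Real.pi)) : sinh y ≠ 0 := by
  by_cases h0 : y.re = 0
  · have h1 := h.resolve_left (by simpa using h0)
    have : y = y.im * I := by
      apply Complex.ext <;> simp [h0]
    rw [this, Complex.sinh_mul_I]
    have h2 := Real.sin_pos_of_pos_of_lt_pi h1.1 h1.2
    refine mul_ne_zero ?_ I_ne_zero
    rw [← Complex.ofReal_sin]
    exact_mod_cast h2.ne'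
  · have h1 := hg_norm_sinh_ge y
    have h2 : Real.exp (-|y.re|) < Real.exp |y.re| := by
      apply Real.exp_lt_exp.2
      have := abs_pos.2 h0
      linarith
    intro h3
    rw [h3, norm_zero] at h1
    linarith

lemma hg_D_bound_far (t a : ℝ) (ht : 0 < t) (ha : 0 < a) (y : ℂ) (hy : a ≤ ‖y‖) (h1 : 1 ≤ |y.re|)
    (h2 : 1 ≤ t * |y.re|) :
    ‖(y * sinh y * sinh (t * y))⁻¹‖ ≤ 16 / a * Real.exp (-(1 + t) * |y.re|) := by
  have e1 := hg_norm_sinh_ge' y h1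
  have hre : |((t:ℂ) * y).re| = t * |y.re| := by simp [abs_mul, abs_of_pos ht]
  have e2 := hg_norm_sinh_ge' (t * y) (by rw [hre]; exact h2)
  rw [hre] at e2
  rw [norm_inv, norm_mul, norm_mul]
  have : a * (Real.exp |y.re| / 4) * (Real.exp (t * |y.re|) / 4) ≤ ‖y‖ * ‖sinh y‖ * ‖sinh (t * y)‖ := by
    gcongr
  calc (‖y‖ * ‖sinh y‖ * ‖sinh (t * y)‖)⁻¹ ≤ (a * (Real.exp |y.re| / 4) * (Real.exp (t * |y.re|) / 4))⁻¹ := by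
        gcongr
    _ = 16 / a * Real.exp (-(1 + t) * |y.re|) := by
        rw [show -(1 + t) * |y.re| = -|y.re| + -(t * |y.re|) by ring, Real.exp_add, Real.exp_neg, Real.exp_neg]
        field_simp
        norm_num

def hgY (a s x : ℝ) : ℂ := x + (a + s * x ^ 2 : ℝ) * I

lemma hgY_re (a s x : ℝ) : (hgY a s x).re = x := by simp [hgY, -Complex.ofReal_add, -Complex.ofReal_mul, -Complex.ofReal_pow]
lemma hgY_im (a s x : ℝ) : (hgY a s x).im = a + s * x ^ 2 := by
  simp [hgY, -Complex.ofReal_add, -Complex.ofReal_mul, -Complex.ofReal_pow]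

lemma hgY_le_norm (a s x : ℝ) (hs : 0 ≤ s) : a ≤ ‖hgY a s x‖ := by
  have := Complex.im_le_norm (hgY a s x)
  rw [hgY_im] at this
  nlinarith [mul_nonneg hs (sq_nonneg x)]

lemma hgY_ne (t a s x : ℝ) (ht : 0 < t) (ha : 0 < a) (h1 : a < Real.pi) (h2 : t * a < Real.pi) :
    hgY a s x ≠ 0 ∧ sinh (hgY a s x) ≠ 0 ∧ sinh (t * hgY a s x) ≠ 0 := by
  have e1 : sinh (hgY a s x) ≠ 0 := by
    apply hg_sinh_ne
    rw [hgY_re, hgY_im]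
    by_cases hx : x = 0
    · right; simp [hx, ha, h1]
    · exact Or.inl hx
  refine ⟨?_, e1, ?_⟩
  · intro h; rw [h] at e1; simp at e1
  · apply hg_sinh_ne
    rw [Complex.re_ofReal_mul, Complex.im_ofReal_mul, hgY_re, hgY_im]
    by_cases hx : x = 0
    · right; simp only [hx]; norm_num; exact ⟨by positivity, h2⟩
    · exact Or.inl (mul_ne_zero ht.ne' hx)

def hgD (t : ℝ) (y : ℂ) : ℂ := y * sinh y * sinh (t * y)

lemma hgY_cont (a s : ℝ) : Continuous (hgY a s) := by unfold hgY; fun_prop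

lemma hgD_ne (t a s x : ℝ) (ht : 0 < t) (ha : 0 < a) (h1 : a < Real.pi) (h2 : t * a < Real.pi) :
    hgD t (hgY a s x) ≠ 0 := by
  obtain ⟨e1, e2, e3⟩ := hgY_ne t a s x ht ha h1 h2
  exact mul_ne_zero (mul_ne_zero e1 e2) e3

lemma hgD_inv_cont (t a s : ℝ) (ht : 0 < t) (ha : 0 < a) (h1 : a < Real.pi) (h2 : t * a < Real.pi) :
    Continuous (fun x => (hgD t (hgY a s x))⁻¹) := by
  apply Continuous.inv₀
  · have := hgY_cont a s
    unfold hgD; fun_prop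
  · intro x; exact hgD_ne t a s x ht ha h1 h2

lemma hgD_bound (t a s : ℝ) (hs : 0 ≤ s) (ht : 0 < t) (ha : 0 < a) (h1 : a < Real.pi)
    (h2 : t * a < Real.pi) :
    ∃ C : ℝ, 0 < C ∧ ∀ x, ‖(hgD t (hgY a s x))⁻¹‖ ≤ C * Real.exp (-(1 + t) * |x|) := by
  have hc := hgD_inv_cont t a s ht ha h1 h2
  have hc2 : Continuous (fun x : ℝ => ‖(hgD t (hgY a s x))⁻¹‖ * Real.exp ((1 + t) * |x|)) := by
    fun_prop
  obtain ⟨C, hC⟩ := (isCompact_Icc (a := -(1 + t⁻¹)) (b := 1 + t⁻¹)).bddAbove_image hc2.continuousOn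
  refine ⟨max C (16 / a), lt_max_of_lt_right (by positivity), fun x => ?_⟩
  by_cases hx : |x| ≤ 1 + t⁻¹
  · have := hC ⟨x, ⟨by linarith [abs_le.1 hx], by linarith [abs_le.1 hx]⟩, rfl⟩
    simp only at this
    have h3 : ‖(hgD t (hgY a s x))⁻¹‖ = (‖(hgD t (hgY a s x))⁻¹‖ * Real.exp ((1 + t) * |x|)) * Real.exp (-(1 + t) * |x|) := by
      rw [mul_assoc, ← Real.exp_add, show (1 + t) * |x| + -(1 + t) * |x| = 0 by ring, Real.exp_zero, mul_one]
    rw [h3]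
    gcongr
    exact this.trans (le_max_left _ _)
  · push Not at hx
    have ht' : 0 < t⁻¹ := by positivity
    have := hg_D_bound_far t a ht ha (hgY a s x) (hgY_le_norm a s x hs) (by rw [hgY_re]; linarith)
      (by rw [hgY_re]
          calc 1 = t * t⁻¹ := by field_simp
            _ ≤ t * |x| := by gcongr; linarith)
    rw [hgY_re] at this
    refine this.trans ?_
    gcongr
    exact le_max_right _ _

lemma hg_integrable_exp (η : ℝ) (hη : 0 < η) : Integrable (fun x : ℝ => Real.exp (-η * |x|)) := by
  have h1 : IntegrableOn (fun x : ℝ => Real.exp (-η * |x|)) (Ioi 0) := by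
    refine (integrableOn_exp_mul_Ioi (a := -η) (by linarith) 0).congr_fun ?_ measurableSet_Ioi
    intro x hx
    simp only [abs_of_pos (show (0:ℝ) < x from hx)]
  have h2 : IntegrableOn (fun x : ℝ => Real.exp (-η * |x|)) (Iic 0) := by
    refine (integrableOn_exp_mul_Iic (a := η) hη 0).congr_fun ?_ measurableSet_Iic
    intro x hx
    simp only [abs_of_nonpos (show x ≤ 0 from hx)]
    ring_nf
  rw [← integrableOn_univ, ← Iic_union_Ioi (a := (0:ℝ))]
  exact h2.union h1

lemma hg_diff (c Y : ℝ → ℂ) (hc : Continuous c) (hY : Continuous Y) (z₀ : ℂ) (δ : ℝ) (hδ : 0 < δ)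
    (b : ℝ → ℝ) (hb : Integrable b)
    (h : ∀ z ∈ Metric.ball z₀ δ, ∀ x, ‖c x * exp (Y x * z)‖ ≤ b x) :
    DifferentiableAt ℂ (fun z => ∫ x, c x * exp (Y x * z)) z₀ := by
  have hd : ∀ x z, HasDerivAt (fun z => c x * exp (Y x * z)) (c x * (exp (Y x * z) * Y x)) z := by
    intro x z
    have := ((hasDerivAt_id z).const_mul (Y x)).cexp.const_mul (c x)
    simpa using this
  have := hasDerivAt_integral_of_dominated_loc_of_deriv_le (μ := volume)
    (F := fun z x => c x * exp (Y x * z)) (F' := fun z x => c x * (exp (Y x * z) * Y x))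
    (x₀ := z₀) (s := Metric.ball z₀ (δ / 2)) (bound := fun x => b x / (δ / 4))
    (Metric.ball_mem_nhds _ (by positivity))
    (Filter.Eventually.of_forall fun z => (by fun_prop : Continuous _).aestronglyMeasurable)
    (hb.mono' (by fun_prop : Continuous _).aestronglyMeasurable
      (Filter.Eventually.of_forall (h z₀ (Metric.mem_ball_self hδ))))
    ((by fun_prop : Continuous _).aestronglyMeasurable)
    (Filter.Eventually.of_forall fun x z hz => by
      rw [← (hd x z).deriv]
      refine Complex.norm_deriv_le_of_forall_mem_sphere_norm_le (by positivity) ?_ ?_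
      · refine Differentiable.diffContOnCl ?_
        intro w; exact (hd x w).differentiableAt
      · intro w hw
        apply h w
        rw [Metric.mem_ball] at hz ⊢
        rw [Metric.mem_sphere] at hw
        have := dist_triangle w z z₀
        linarith)
    (hb.div_const _)
    (Filter.Eventually.of_forall fun x z hz => hd x z)
  exact this.2.differentiableAt


/-- integrand along the contour, factored -/
def hgc (t a s x : ℝ) : ℂ := (1 + 2 * s * x * I) * (hgD t (hgY a s x))⁻¹

def hgJ (t a s : ℝ) (z : ℂ) : ℂ := ∫ x : ℝ, hgc t a s x * exp (t * hgY a s x * z)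

lemma hgc_cont (t a s : ℝ) (ht : 0 < t) (ha : 0 < a) (h1 : a < Real.pi) (h2 : t * a < Real.pi) :
    Continuous (hgc t a s) := by
  have := hgD_inv_cont t a s ht ha h1 h2
  unfold hgc
  fun_prop

lemma hg_norm_exp (t a s x : ℝ) (z : ℂ) :
    ‖exp (t * hgY a s x * z)‖ = Real.exp (t * (x * z.re - (a + s * x ^ 2) * z.im)) := by
  rw [Complex.norm_exp]
  congr 1
  rw [mul_assoc, Complex.re_ofReal_mul, Complex.mul_re, hgY_re, hgY_im]

lemma hg_bound0 (t a : ℝ) (ht : 0 < t) (ha : 0 < a) (h1 : a < Real.pi) (h2 : t * a < Real.pi) :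
    ∃ C : ℝ, 0 < C ∧ ∀ (x : ℝ) (z : ℂ), ‖hgc t a 0 x * exp (t * hgY a 0 x * z)‖ ≤
      C * Real.exp (t * a * |z.im|) * Real.exp (-(1 + t - t * |z.re|) * |x|) := by
  obtain ⟨C, hC, hb⟩ := hgD_bound t a 0 le_rfl ht ha h1 h2
  refine ⟨C, hC, fun x z => ?_⟩
  rw [norm_mul, hg_norm_exp]
  have e : ‖hgc t a 0 x‖ ≤ C * Real.exp (-(1 + t) * |x|) := by
    simpa [hgc] using hb x
  calc _ ≤ C * Real.exp (-(1 + t) * |x|) * Real.exp (t * (|x| * |z.re| + a * |z.im|)) := by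
        gcongr
        have := neg_abs_le z.im
        have := le_abs_self (x * z.re)
        rw [abs_mul] at this
        nlinarith
    _ = _ := by
        rw [mul_assoc, mul_assoc, ← Real.exp_add, ← Real.exp_add]
        ring_nf

lemma hg_bound1 (t a : ℝ) (ht : 0 < t) (ha : 0 < a) (h1 : a < Real.pi) (h2 : t * a < Real.pi)
    (B v : ℝ) (hB : 0 ≤ B) (hv : 0 < v) :
    ∃ C : ℝ, 0 < C ∧ ∀ (x : ℝ) (z : ℂ), |z.re| ≤ B → v ≤ z.im →
      ‖hgc t a 1 x * exp (t * hgY a 1 x * z)‖ ≤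
      C * Real.exp (-t * a * z.im) * Real.exp (-1 * |x|) := by
  obtain ⟨C, hC, hb⟩ := hgD_bound t a 1 zero_le_one ht ha h1 h2
  set K : ℝ := (3 + t * B) ^ 2 / (4 * t * v) with hK
  refine ⟨C * Real.exp K, by positivity, fun x z hz hzi => ?_⟩
  rw [norm_mul, hg_norm_exp]
  have e : ‖hgc t a 1 x‖ ≤ Real.exp (2 * |x|) * (C * Real.exp (-(1 + t) * |x|)) := by
    rw [hgc, norm_mul]
    gcongr
    · calc ‖(1 + 2 * ((1 : ℝ) : ℂ) * x * I : ℂ)‖ ≤ ‖(1 : ℂ)‖ + ‖2 * ((1 : ℝ) : ℂ) * x * I‖ := norm_add_le _ _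
        _ = 2 * |x| + 1 := by simp [add_comm]
        _ ≤ _ := Real.add_one_le_exp _
    · exact hb x
  have e2 : 2 * |x| + (-(1 + t) * |x|) + t * (x * z.re - (a + 1 * x ^ 2) * z.im)
      ≤ K + (-t * a * z.im) + (-1 * |x|) := by
    have p1 : x * z.re ≤ |x| * B := by
      refine (le_abs_self _).trans ?_
      rw [abs_mul]; gcongr
    have p2 : (3 + t * B) * |x| - t * v * x ^ 2 ≤ K := by
      rw [hK, le_div_iff₀ (by positivity), ← sq_abs x]
      nlinarith [sq_nonneg (2 * t * v * |x| - (3 + t * B))]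
    have p3 : t * v * x ^ 2 ≤ t * z.im * x ^ 2 := by gcongr
    have p4 : t * (x * z.re) ≤ t * (|x| * B) := by gcongr
    have p5 : 0 ≤ t * |x| := by positivity
    nlinarith [abs_nonneg x]
  calc _ ≤ Real.exp (2 * |x|) * (C * Real.exp (-(1 + t) * |x|)) *
        Real.exp (t * (x * z.re - (a + 1 * x ^ 2) * z.im)) := by gcongr
    _ = C * Real.exp (2 * |x| + (-(1 + t) * |x|) + t * (x * z.re - (a + 1 * x ^ 2) * z.im)) := by
        rw [Real.exp_add, Real.exp_add]; ring
    _ ≤ C * Real.exp (K + (-t * a * z.im) + (-1 * |x|)) := by gcongr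
    _ = _ := by rw [Real.exp_add, Real.exp_add]; ring

lemma hgF_cont (t a s : ℝ) (ht : 0 < t) (ha : 0 < a) (h1 : a < Real.pi) (h2 : t * a < Real.pi)
    (z : ℂ) : Continuous fun x : ℝ => hgc t a s x * exp (t * hgY a s x * z) := by
  have := hgc_cont t a s ht ha h1 h2
  have := hgY_cont a s
  fun_prop

lemma hg_int0 (t a : ℝ) (ht : 0 < t) (ha : 0 < a) (h1 : a < Real.pi) (h2 : t * a < Real.pi)
    (z : ℂ) (hz : t * |z.re| < 1 + t) :
    Integrable (fun x : ℝ => hgc t a 0 x * exp (t * hgY a 0 x * z)) := by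
  obtain ⟨C, hC, hb⟩ := hg_bound0 t a ht ha h1 h2
  exact ((hg_integrable_exp (1 + t - t * |z.re|) (by linarith)).const_mul
    (C * Real.exp (t * a * |z.im|))).mono' (hgF_cont t a 0 ht ha h1 h2 z).aestronglyMeasurable
    (Filter.Eventually.of_forall fun x => hb x z)

lemma hg_int1 (t a : ℝ) (ht : 0 < t) (ha : 0 < a) (h1 : a < Real.pi) (h2 : t * a < Real.pi)
    (z : ℂ) (hz : 0 < z.im) :
    Integrable (fun x : ℝ => hgc t a 1 x * exp (t * hgY a 1 x * z)) := by
  obtain ⟨C, hC, hb⟩ := hg_bound1 t a ht ha h1 h2 |z.re| z.im (abs_nonneg _) hz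
  exact ((hg_integrable_exp 1 one_pos).const_mul
    (C * Real.exp (-t * a * z.im))).mono' (hgF_cont t a 1 ht ha h1 h2 z).aestronglyMeasurable
    (Filter.Eventually.of_forall fun x => hb x z le_rfl le_rfl)

lemma hgJ0_diff (t a : ℝ) (ht : 0 < t) (ha : 0 < a) (h1 : a < Real.pi) (h2 : t * a < Real.pi)
    (z : ℂ) (hz : t * |z.re| < 1 + t) : DifferentiableAt ℂ (hgJ t a 0) z := by
  obtain ⟨C, hC, hb⟩ := hg_bound0 t a ht ha h1 h2
  set κ : ℝ := 1 + t - t * |z.re| with hκ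
  have hκ0 : 0 < κ := by linarith
  have hYc := hgY_cont a 0
  refine hg_diff (hgc t a 0) (fun x => t * hgY a 0 x) (hgc_cont t a 0 ht ha h1 h2)
    (by fun_prop) z (κ / (2 * t)) (by positivity)
    (fun x => C * Real.exp (t * a * (|z.im| + κ / (2 * t))) * Real.exp (-(κ / 2) * |x|))
    ((hg_integrable_exp (κ / 2) (by positivity)).const_mul _) ?_
  intro w hw x
  refine (hb x w).trans ?_
  rw [Metric.mem_ball, dist_eq_norm] at hw
  have q1 : |w.re| ≤ |z.re| + κ / (2 * t) := by
    have e1 := Complex.abs_re_le_norm (w - z)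
    have e2 := abs_sub_abs_le_abs_sub w.re z.re
    rw [Complex.sub_re] at e1
    linarith
  have q2 : |w.im| ≤ |z.im| + κ / (2 * t) := by
    have e1 := Complex.abs_im_le_norm (w - z)
    have e2 := abs_sub_abs_le_abs_sub w.im z.im
    rw [Complex.sub_im] at e1
    linarith
  have q3 : t * |w.re| ≤ t * |z.re| + κ / 2 := by
    calc t * |w.re| ≤ t * (|z.re| + κ / (2 * t)) := by gcongr
      _ = _ := by field_simp
  gcongr
  linarith

lemma hgJ1_diff (t a : ℝ) (ht : 0 < t) (ha : 0 < a) (h1 : a < Real.pi) (h2 : t * a < Real.pi)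
    (z : ℂ) (hz : 0 < z.im) : DifferentiableAt ℂ (hgJ t a 1) z := by
  obtain ⟨C, hC, hb⟩ := hg_bound1 t a ht ha h1 h2 (|z.re| + z.im / 2) (z.im / 2) (by positivity)
    (by positivity)
  have hYc := hgY_cont a 1
  refine hg_diff (hgc t a 1) (fun x => t * hgY a 1 x) (hgc_cont t a 1 ht ha h1 h2)
    (by fun_prop) z (z.im / 2) (by positivity)
    (fun x => C * Real.exp (-t * a * (z.im / 2)) * Real.exp (-1 * |x|))
    ((hg_integrable_exp 1 one_pos).const_mul _) ?_
  intro w hw x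
  rw [Metric.mem_ball, dist_eq_norm] at hw
  have q1 : |w.re| ≤ |z.re| + z.im / 2 := by
    have e1 := Complex.abs_re_le_norm (w - z)
    have e2 := abs_sub_abs_le_abs_sub w.re z.re
    rw [Complex.sub_re] at e1
    linarith
  have q2 : z.im / 2 ≤ w.im := by
    have e1 := Complex.abs_im_le_norm (w - z)
    rw [Complex.sub_im] at e1
    have := abs_le.1 e1
    linarith
  refine (hb x w q1 q2).trans ?_
  have : -t * a * w.im ≤ -t * a * (z.im / 2) := by
    have : 0 < t * a := by positivity
    nlinarith
  gcongr

lemma hgJ1_bound (t a : ℝ) (ht : 0 < t) (ha : 0 < a) (h1 : a < Real.pi) (h2 : t * a < Real.pi)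
    (B : ℝ) (hB : 0 ≤ B) :
    ∃ C : ℝ, 0 ≤ C ∧ ∀ z : ℂ, |z.re| ≤ B → 1 ≤ z.im →
      ‖hgJ t a 1 z‖ ≤ C * Real.exp (-t * a * z.im) := by
  obtain ⟨C, hC, hb⟩ := hg_bound1 t a ht ha h1 h2 B 1 hB one_pos
  refine ⟨C * ∫ x : ℝ, Real.exp (-1 * |x|), mul_nonneg hC.le (integral_nonneg fun x => (Real.exp_pos _).le), ?_⟩
  intro z hz hzi
  have := norm_integral_le_of_norm_le ((hg_integrable_exp 1 one_pos).const_mul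
    (C * Real.exp (-t * a * z.im))) (Filter.Eventually.of_forall fun x => hb x z hz hzi)
  refine this.trans (le_of_eq ?_)
  rw [integral_const_mul]
  ring

/-- homotopy on a finite rectangle -/
lemma hg_homotopy (g : ℂ → ℂ) (a : ℝ) (hg : ∀ s x : ℝ, DifferentiableAt ℂ g (hgY a s x)) (X : ℝ) :
    (∫ x in (-X)..X, g (hgY a 1 x) * (1 + 2 * x * I)) - (∫ x in (-X)..X, g (hgY a 0 x)) =
      (∫ s in (0:ℝ)..1, g (hgY a s X) * (X ^ 2 * I)) - ∫ s in (0:ℝ)..1, g (hgY a s (-X)) * (X ^ 2 * I) := by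
  set f : ℝ × ℝ → ℂ := fun p => -(g (hgY a p.2 p.1) * (p.1 ^ 2 * I)) with hf
  set h : ℝ × ℝ → ℂ := fun p => g (hgY a p.2 p.1) * (1 + 2 * p.2 * p.1 * I) with hh
  have hc1 : ∀ p : ℝ × ℝ, DifferentiableAt ℝ (fun p : ℝ × ℝ => (p.1 : ℂ)) p := fun p =>
    (Complex.ofRealCLM.differentiableAt).comp p differentiableAt_fst
  have hc2 : ∀ p : ℝ × ℝ, DifferentiableAt ℝ (fun p : ℝ × ℝ => (p.2 : ℂ)) p := fun p =>
    (Complex.ofRealCLM.differentiableAt).comp p differentiableAt_snd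
  have hYd : Differentiable ℝ (fun p : ℝ × ℝ => hgY a p.2 p.1) := by
    intro p
    have := hc1 p
    have := hc2 p
    unfold hgY
    push_cast
    fun_prop
  have hgd : Differentiable ℝ (fun p : ℝ × ℝ => g (hgY a p.2 p.1)) := by
    intro p
    exact ((hg p.2 p.1).restrictScalars ℝ).comp p (hYd p)
  have hfd : Differentiable ℝ f := by
    intro p
    have := hc1 p
    have := hc2 p
    exact ((hgd p).mul (by fun_prop)).neg
  have hhd : Differentiable ℝ h := by
    intro p
    have := hc1 p
    have := hc2 p
    exact (hgd p).mul (by fun_prop)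
  have hx : ∀ s x : ℝ, HasDerivAt (fun u : ℝ => hgY a s u) (1 + 2 * s * x * I) x := by
    intro s x
    have e := (Complex.ofRealCLM.hasDerivAt (x := x))
    have e2 := (e.add ((((e.pow 2).const_mul (s : ℂ)).const_add (a : ℂ)).mul_const I))
    refine (e2.congr_deriv ?_).congr_of_eventuallyEq (Filter.Eventually.of_forall fun u => ?_)
    · simp; ring
    · simp [hgY]
  have hs : ∀ s x : ℝ, HasDerivAt (fun u : ℝ => hgY a u x) (x ^ 2 * I) s := by
    intro s x
    have e := (Complex.ofRealCLM.hasDerivAt (x := s))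
    have e2 := (((e.mul_const ((x : ℂ) ^ 2)).const_add (a : ℂ)).mul_const I).const_add (x : ℂ)
    refine (e2.congr_deriv ?_).congr_of_eventuallyEq (Filter.Eventually.of_forall fun u => ?_)
    · simp
    · simp [hgY]
  have hzero : ∀ p : ℝ × ℝ, fderiv ℝ f p (1, 0) + fderiv ℝ h p (0, 1) = 0 := by
    rintro ⟨x, s⟩
    have l1 : HasDerivAt (fun u : ℝ => (u, s)) ((1 : ℝ), (0 : ℝ)) x :=
      (hasDerivAt_id x).prodMk (hasDerivAt_const x s)
    have l2 : HasDerivAt (fun u : ℝ => (x, u)) ((0 : ℝ), (1 : ℝ)) s :=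
      (hasDerivAt_const s x).prodMk (hasDerivAt_id s)
    have d1 := (hfd (x, s)).hasFDerivAt.comp_hasDerivAt x l1
    have d2 := (hhd (x, s)).hasFDerivAt.comp_hasDerivAt s l2
    have g1 := (hg s x).hasDerivAt.comp x (hx s x)
    have g2 := (hg s x).hasDerivAt.comp s (hs s x)
    have ex := (Complex.ofRealCLM.hasDerivAt (x := x))
    have es := (Complex.ofRealCLM.hasDerivAt (x := s))
    have d1' := (g1.mul ((ex.pow 2).mul_const I)).neg
    have d2' := g2.mul ((((es.const_mul (2 : ℂ)).mul_const (x : ℂ)).mul_const I).const_add (1 : ℂ))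
    have u1 := d1.unique (d1'.congr_of_eventuallyEq (Filter.Eventually.of_forall fun u => by simp [hf]))
    have u2 := d2.unique (d2'.congr_of_eventuallyEq (Filter.Eventually.of_forall fun u => by simp [hh]))
    rw [u1, u2]
    simp
    ring
  have main := integral2_divergence_prod_of_hasFDerivAt_off_countable f h (fderiv ℝ f) (fderiv ℝ h)
    (-X) 0 X 1 ∅ countable_empty hfd.continuous.continuousOn hhd.continuous.continuousOn
    (fun p _ => (hfd p).hasFDerivAt) (fun p _ => (hhd p).hasFDerivAt)
    (by simp only [hzero]; exact integrableOn_zero)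
  simp only [hzero] at main
  simp only [hf, hh, intervalIntegral.integral_neg, intervalIntegral.integral_zero] at main
  simp at main
  simp only [sub_eq_add_neg] at main ⊢
  simp
  linear_combination -main


lemma hgJ_eq (t a : ℝ) (ht : 0 < t) (ha : 0 < a) (h1 : a < Real.pi) (h2 : t * a < Real.pi)
    (z : ℂ) (hz : t * |z.re| < 1 + t) (hzi : 0 < z.im) : hgJ t a 1 z = hgJ t a 0 z := by
  set g : ℂ → ℂ := fun y => exp (t * y * z) * (hgD t y)⁻¹ with hg
  have hgd : ∀ s x : ℝ, DifferentiableAt ℂ g (hgY a s x) := by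
    intro s x
    have hne := hgD_ne t a s x ht ha h1 h2
    have : DifferentiableAt ℂ (hgD t) (hgY a s x) := by unfold hgD; fun_prop
    exact DifferentiableAt.mul (by fun_prop) (this.inv hne)
  have hh := hg_homotopy g a hgd
  have L1 : Tendsto (fun X : ℝ => ∫ x in (-X)..X, g (hgY a 1 x) * (1 + 2 * x * I)) atTop (𝓝 (hgJ t a 1 z)) := by
    have := intervalIntegral_tendsto_integral (hg_int1 t a ht ha h1 h2 z hzi) tendsto_neg_atTop_atBot tendsto_id
    refine this.congr fun X => ?_
    refine intervalIntegral.integral_congr fun x _ => ?_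
    simp [hg, hgc]; ring
  have L0 : Tendsto (fun X : ℝ => ∫ x in (-X)..X, g (hgY a 0 x)) atTop (𝓝 (hgJ t a 0 z)) := by
    have := intervalIntegral_tendsto_integral (hg_int0 t a ht ha h1 h2 z hz) tendsto_neg_atTop_atBot tendsto_id
    refine this.congr fun X => ?_
    refine intervalIntegral.integral_congr fun x _ => ?_
    simp [hg, hgc]; ring
  set κ : ℝ := 1 + t - t * |z.re| with hκ
  have hκ0 : 0 < κ := by linarith
  have hbd : ∀ x : ℝ, 1 + t⁻¹ ≤ |x| → ∀ s : ℝ, 0 ≤ s → ‖g (hgY a s x) * (x ^ 2 * I)‖ ≤ 16 / a * (|x| ^ 2 * Real.exp (-(κ * |x|))) := by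
    intro x hx s hs
    have ht' : 0 < t⁻¹ := by positivity
    have b1 := hg_D_bound_far t a ht ha (hgY a s x) (hgY_le_norm a s x hs) (by rw [hgY_re]; linarith)
      (by rw [hgY_re]
          calc 1 = t * t⁻¹ := by field_simp
            _ ≤ t * |x| := by gcongr; linarith)
    rw [hgY_re] at b1
    rw [norm_mul, hg, norm_mul, hg_norm_exp]
    have b2 : t * (x * z.re - (a + s * x ^ 2) * z.im) ≤ t * |z.re| * |x| := by
      have := le_abs_self (x * z.re)
      rw [abs_mul] at this
      have : 0 ≤ (a + s * x ^ 2) * z.im := by positivity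
      have : t * (x * z.re - (a + s * x ^ 2) * z.im) ≤ t * (|x| * |z.re|) := by
        gcongr
        linarith
      linarith
    have b3 : ‖(x : ℂ) ^ 2 * I‖ = |x| ^ 2 := by simp
    rw [b3]
    calc _ ≤ Real.exp (t * |z.re| * |x|) * (16 / a * Real.exp (-(1 + t) * |x|)) * |x| ^ 2 := by
          gcongr
          exact b1
      _ = _ := by
          rw [show -(κ * |x|) = t * |z.re| * |x| + -(1 + t) * |x| by rw [hκ]; ring, Real.exp_add]
          ring
  have hlim : Tendsto (fun X : ℝ => 16 / a * (X ^ 2 * Real.exp (-(κ * X)))) atTop (𝓝 0) := by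
    have := (Real.tendsto_pow_mul_exp_neg_atTop_nhds_zero 2).comp (tendsto_id.const_mul_atTop hκ0)
    have := (this.const_mul (16 / a / κ ^ 2))
    rw [mul_zero] at this
    refine this.congr fun X => ?_
    simp only [Function.comp, id]
    field_simp
  have R1 : ∀ σ : ℝ, |σ| = 1 → Tendsto (fun X : ℝ => ∫ s in (0:ℝ)..1, g (hgY a s (σ * X)) * (X ^ 2 * I)) atTop (𝓝 0) := by
    intro σ hσ
    refine squeeze_zero_norm' ?_ hlim
    filter_upwards [eventually_ge_atTop (1 + t⁻¹)] with X hX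
    have ht' : 0 < t⁻¹ := by positivity
    have hX0 : |σ * X| = X := by rw [abs_mul, hσ, one_mul, abs_of_pos (by linarith)]
    have := intervalIntegral.norm_integral_le_of_norm_le_const (a := (0:ℝ)) (b := 1)
      (f := fun s => g (hgY a s (σ * X)) * (X ^ 2 * I)) (C := 16 / a * (X ^ 2 * Real.exp (-(κ * X)))) ?_
    · simpa using this
    · intro s hs
      rw [uIoc_of_le zero_le_one] at hs
      have e := hbd (σ * X) (by rw [hX0]; exact hX) s hs.1.le
      rw [hX0] at e
      have e2 : (((σ * X : ℝ) : ℂ)) ^ 2 = (X : ℂ) ^ 2 := by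
        rw [← Complex.ofReal_pow, ← sq_abs, hX0, Complex.ofReal_pow]
      rwa [e2] at e
  have T := (L1.sub L0).congr hh
  have T2 := (R1 1 (by simp)).sub (R1 (-1) (by simp))
  simp only [one_mul, neg_one_mul, sub_zero] at T2
  exact sub_eq_zero.1 (tendsto_nhds_unique T T2)

def hgH (t : ℝ) (z : ℂ) (y : ℝ) : ℂ := (z / y - sinh (t * y * z) / (sinh y * sinh (t * y))) / y

lemma hg_inv_lim (a : ℝ) (ha : 0 < a) :
    Tendsto (fun X : ℝ => ∫ x in (-X)..X, (hgY a 0 x)⁻¹) atTop (𝓝 (-(Real.pi * I))) := by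
  have hd : ∀ x : ℝ, HasDerivAt (fun x : ℝ => ((Real.log (x ^ 2 + a ^ 2) / 2 : ℝ) : ℂ) - I * (Real.arctan (x / a) : ℝ))
      ((hgY a 0 x)⁻¹) x := by
    intro x
    have hp : x ^ 2 + a ^ 2 ≠ 0 := by positivity
    have d1 := ((((hasDerivAt_pow 2 x).add_const (a ^ 2)).log hp).div_const 2).ofReal_comp
    have d2 := ((((hasDerivAt_id x).div_const a).arctan).ofReal_comp).const_mul I
    refine (d1.sub d2).congr_deriv ?_
    have hne : hgY a 0 x ≠ 0 := by
      intro h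
      have := hgY_im a 0 x
      rw [h] at this; simp at this; linarith
    apply eq_inv_of_mul_eq_one_left
    have hp2 : 1 + (x / a) ^ 2 ≠ 0 := by positivity
    have : (1 / (1 + (x / a) ^ 2) * (1 / a)) = a / (x ^ 2 + a ^ 2) := by
      field_simp; ring
    simp only [id, this]
    have hpc : (x : ℂ) ^ 2 + (a : ℂ) ^ 2 ≠ 0 := by exact_mod_cast hp
    simp only [hgY]
    push_cast
    field_simp
    linear_combination (-(a : ℂ) ^ 2) * I_sq
  have hne : ∀ x : ℝ, hgY a 0 x ≠ 0 := by
    intro x h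
    have := hgY_im a 0 x
    rw [h] at this; simp at this; linarith
  have hintegral : ∀ X : ℝ, ∫ x in (-X)..X, (hgY a 0 x)⁻¹ = -(2 * I) * (Real.arctan (X / a) : ℝ) := by
    intro X
    rw [intervalIntegral.integral_eq_sub_of_hasDerivAt (fun x _ => hd x)
      (((hgY_cont a 0).inv₀ hne).intervalIntegrable _ _)]
    rw [neg_div, Real.arctan_neg, neg_sq]
    push_cast
    ring
  simp only [hintegral]
  have h1 : Tendsto (fun X : ℝ => Real.arctan (X / a)) atTop (𝓝 (Real.pi / 2)) :=
    (tendsto_nhds_of_tendsto_nhdsWithin Real.tendsto_arctan_atTop).comp (tendsto_id.atTop_div_const ha)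
  have h2 := ((Complex.continuous_ofReal.tendsto _).comp h1).const_mul (-(2 * I))
  have h3 : -(2 * I) * ((Real.pi / 2 : ℝ) : ℂ) = -(Real.pi * I) := by push_cast; ring
  rw [h3] at h2
  exact h2

lemma hg_pow_lim (a : ℝ) (ha : 0 < a) (p q : ℂ) :
    Tendsto (fun X : ℝ => ∫ x in (-X)..X, (p / (hgY a 0 x) ^ 3 + q / (hgY a 0 x) ^ 2)) atTop (𝓝 0) := by
  have hne : ∀ x : ℝ, hgY a 0 x ≠ 0 := by
    intro x h
    have := hgY_im a 0 x
    rw [h] at this; simp at this; linarith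
  have hx : ∀ x : ℝ, HasDerivAt (fun u : ℝ => hgY a 0 u) 1 x := by
    intro x
    have e := (Complex.ofRealCLM.hasDerivAt (x := x)).add_const ((a : ℂ) * I)
    refine (e.congr_deriv (by simp)).congr_of_eventuallyEq (Filter.Eventually.of_forall fun u => ?_)
    simp [hgY]
  set P : ℝ → ℂ := fun x => -(p / 2) * ((hgY a 0 x)⁻¹) ^ 2 - q * (hgY a 0 x)⁻¹ with hP
  have hd : ∀ x : ℝ, HasDerivAt P (p / (hgY a 0 x) ^ 3 + q / (hgY a 0 x) ^ 2) x := by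
    intro x
    have e := (hx x).inv (hne x)
    have e2 := ((e.pow 2).const_mul (-(p / 2))).sub (e.const_mul q)
    refine e2.congr_deriv ?_
    have := hne x
    simp only [Pi.inv_apply]
    norm_num
    field_simp
    ring
  have hc := hgY_cont a 0
  have hintegral : ∀ X : ℝ, ∫ x in (-X)..X, (p / (hgY a 0 x) ^ 3 + q / (hgY a 0 x) ^ 2) = P X - P (-X) := by
    intro X
    refine intervalIntegral.integral_eq_sub_of_hasDerivAt (fun x _ => hd x) (Continuous.intervalIntegrable ?_ _ _)
    exact (continuous_const.div (hc.pow 3) fun x => pow_ne_zero _ (hne x)).add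
      (continuous_const.div (hc.pow 2) fun x => pow_ne_zero _ (hne x))
  simp only [hintegral]
  have hinv : ∀ σ : ℝ, |σ| = 1 → Tendsto (fun X : ℝ => P (σ * X)) atTop (𝓝 0) := by
    intro σ hσ
    have l : Tendsto (fun X : ℝ => (hgY a 0 (σ * X))⁻¹) atTop (𝓝 0) := by
      refine squeeze_zero_norm' ?_ tendsto_inv_atTop_zero
      filter_upwards [eventually_gt_atTop 0] with X hX
      rw [norm_inv]
      gcongr
      have := Complex.abs_re_le_norm (hgY a 0 (σ * X))
      rwa [hgY_re, abs_mul, hσ, one_mul, abs_of_pos hX] at this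
    have := ((l.pow 2).const_mul (-(p / 2))).sub (l.const_mul q)
    simpa [hP] using this
  have := (hinv 1 (by simp)).sub (hinv (-1) (by simp))
  simpa using this


lemma hg_step1 (t a : ℝ) (ht : 0 < t) (ha : 0 < a) (h1 : a < Real.pi) (h2 : t * a < Real.pi)
    (z : ℂ) (hz : t * |z.re| < 1 + t) :
    ∫ y in Ioi (0 : ℝ), hgH t z y =
      -(hgJ t a 0 z + Real.pi * I * (t * z ^ 2 / 2 - (t + (t : ℂ)⁻¹) / 6)) / 2 := by
  obtain ⟨W, hW, hWd⟩ := hg_exists_W t ht z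
  set r : ℂ := t * z ^ 2 / 2 - (t + (t : ℂ)⁻¹) / 6 with hr
  have ht' : 0 < t⁻¹ := by positivity
  set κ : ℝ := 1 + t - t * |z.re| with hκ
  have hκ0 : 0 < κ := by linarith
  have hsR : ∀ y : ℝ, y ≠ 0 → sinh (y : ℂ) ≠ 0 ∧ sinh ((t : ℂ) * y) ≠ 0 := by
    intro y hy
    exact ⟨hg_sinh_ne _ (Or.inl (by simpa using hy)), hg_sinh_ne _ (Or.inl (by simp [hy, ht.ne']))⟩
  have hWc : Continuous (fun y : ℝ => W y) := by
    rw [continuous_iff_continuousAt]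
    intro y
    have : DifferentiableAt ℂ W y := hWd y (by
      by_cases hy : y = 0
      · left; simp [hy]
      · right; exact hsR y hy)
    exact this.continuousAt.comp Complex.continuous_ofReal.continuousAt
  have hHW : ∀ y : ℝ, 0 < y → hgH t z y = -(W y + W ((-y : ℝ) : ℂ)) / 2 := by
    intro y hy
    obtain ⟨s1, s2⟩ := hsR y hy.ne'
    have hyc : (y : ℂ) ≠ 0 := by exact_mod_cast hy.ne'
    have htc : (t : ℂ) ≠ 0 := by exact_mod_cast ht.ne'
    rw [hW y hyc s1 s2]
    push_cast
    have e1 : sinh (-(y : ℂ)) = - sinh y := Complex.sinh_neg _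
    have e2 : sinh ((t : ℂ) * -(y : ℂ)) = - sinh (t * y) := by rw [mul_neg, Complex.sinh_neg]
    rw [hW (-y) (neg_ne_zero.2 hyc) (by rw [e1]; exact neg_ne_zero.2 s1) (by rw [e2]; exact neg_ne_zero.2 s2),
      e1, e2, hgH]
    rw [show sinh ((t : ℂ) * y * z) = (exp (t * y * z) - exp (-(t * y * z))) / 2 from rfl,
      show (t : ℂ) * -y * z = -(t * y * z) by ring]
    generalize exp ((t : ℂ) * y * z) = E1
    generalize exp (-((t : ℂ) * y * z)) = E2
    generalize sinh (y : ℂ) = S1 at *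
    generalize sinh ((t : ℂ) * y) = S2 at *
    clear_value r
    field_simp
    ring
  -- integrability
  have hcW : Continuous (fun y : ℝ => -(W y + W ((-y : ℝ) : ℂ)) / 2) := by
    have : Continuous (fun y : ℝ => W ((-y : ℝ) : ℂ)) := hWc.comp continuous_neg
    exact ((hWc.add this).neg).div_const 2
  have hHint : IntegrableOn (hgH t z) (Ioi 0) := by
    rw [← Ioc_union_Ioi_eq_Ioi (show (0:ℝ) ≤ 1 + t⁻¹ by positivity)]
    refine IntegrableOn.union ?_ ?_
    · have : IntegrableOn (fun y : ℝ => -(W y + W ((-y : ℝ) : ℂ)) / 2) (Ioc 0 (1 + t⁻¹)) :=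
        (hcW.integrableOn_Icc).mono_set Ioc_subset_Icc_self
      exact this.congr_fun (fun y hy => (hHW y hy.1).symm) measurableSet_Ioc
    · have i1 : IntegrableOn (fun y : ℝ => ‖z‖ * y ^ (-2 : ℝ)) (Ioi (1 + t⁻¹)) :=
        (integrableOn_Ioi_rpow_of_lt (by norm_num) (by positivity)).const_mul _
      have i2 : IntegrableOn (fun y : ℝ => 16 * Real.exp (-κ * |y|)) (Ioi (1 + t⁻¹)) :=
        ((hg_integrable_exp κ hκ0).const_mul 16).integrableOn
      refine Integrable.mono' (i1.add i2) ?_ ?_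
      · refine (hcW.aestronglyMeasurable (μ := volume.restrict (Ioi (1 + t⁻¹)))).congr ?_
        refine (ae_restrict_iff' measurableSet_Ioi).2 (Eventually.of_forall fun y hy => ?_)
        have hy : 1 + t⁻¹ < y := hy
        exact (hHW y (by linarith)).symm
      · refine (ae_restrict_iff' measurableSet_Ioi).2 (Eventually.of_forall fun y hy => ?_)
        have hy : 1 + t⁻¹ < y := hy
        have hy0 : 0 < y := by linarith
        have hyc : (y : ℂ) ≠ 0 := by exact_mod_cast hy0.ne'
        have b := hg_D_bound_far t 1 ht one_pos (y : ℂ) (by simp [abs_of_pos hy0]; linarith)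
          (by simp [abs_of_pos hy0]; linarith)
          (by rw [Complex.ofReal_re, abs_of_pos hy0]
              calc 1 = t * t⁻¹ := by field_simp
                _ ≤ t * y := by gcongr; linarith)
        rw [Complex.ofReal_re] at b
        have e : hgH t z y = z / y ^ 2 - sinh (t * y * z) * ((y : ℂ) * sinh y * sinh (t * y))⁻¹ := by
          rw [hgH, sub_div, div_div, div_div, ← pow_two, div_eq_mul_inv (sinh (t * y * z))]
          congr 3
          ring
        have hsn : ‖sinh ((t : ℂ) * y * z)‖ ≤ Real.exp (t * |z.re| * |y|) := by
          have hre : ((t : ℂ) * y * z).re = t * y * z.re := by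
            rw [← Complex.ofReal_mul, Complex.re_ofReal_mul]
          have m1 : t * y * z.re ≤ t * |z.re| * |y| := by
            rw [abs_of_pos hy0]
            have := le_abs_self z.re
            have : t * y * z.re ≤ t * y * |z.re| := by gcongr
            linarith
          have m2 : -(t * y * z.re) ≤ t * |z.re| * |y| := by
            rw [abs_of_pos hy0]
            have := neg_abs_le z.re
            have : t * y * (-z.re) ≤ t * y * |z.re| := by gcongr; linarith
            linarith
          have n1 : ‖exp ((t : ℂ) * y * z)‖ ≤ Real.exp (t * |z.re| * |y|) := by
            rw [Complex.norm_exp, hre]; gcongr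
          have n2 : ‖exp (-((t : ℂ) * y * z))‖ ≤ Real.exp (t * |z.re| * |y|) := by
            rw [Complex.norm_exp, Complex.neg_re, hre]; gcongr
          rw [Complex.sinh, norm_div, Complex.norm_ofNat]
          have := norm_sub_le (exp ((t : ℂ) * y * z)) (exp (-((t : ℂ) * y * z)))
          linarith
        rw [e]
        refine (norm_sub_le _ _).trans ?_
        rw [Pi.add_apply]
        refine add_le_add (le_of_eq ?_) ?_
        · rw [norm_div, norm_pow, Complex.norm_real, Real.norm_eq_abs, sq_abs,
            Real.rpow_neg hy0.le, div_eq_mul_inv]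
          norm_num
        · rw [norm_mul]
          calc _ ≤ Real.exp (t * |z.re| * |y|) * (16 / 1 * Real.exp (-(1 + t) * |y|)) := by
                gcongr
            _ = _ := by
                rw [show -κ * |y| = t * |z.re| * |y| + -(1 + t) * |y| by rw [hκ]; ring, Real.exp_add]
                ring
  -- real line limit
  have LR : Tendsto (fun X : ℝ => ∫ x in (-X)..X, W x) atTop (𝓝 (-2 * ∫ y in Ioi (0 : ℝ), hgH t z y)) := by
    have := (intervalIntegral_tendsto_integral_Ioi (0:ℝ) hHint tendsto_id).const_mul (-2)
    refine this.congr' ?_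
    filter_upwards [eventually_gt_atTop 0] with X hX
    have c1 : ∫ x in (0:ℝ)..X, hgH t z x = ∫ x in (0:ℝ)..X, -(W x + W ((-x : ℝ) : ℂ)) / 2 := by
      rw [intervalIntegral.integral_of_le hX.le, intervalIntegral.integral_of_le hX.le]
      exact setIntegral_congr_fun measurableSet_Ioc fun y hy => hHW y hy.1
    have hWn : Continuous (fun y : ℝ => W ((-y : ℝ) : ℂ)) := hWc.comp continuous_neg
    have c2 : ∫ x in (-X)..0, W x = ∫ x in (0:ℝ)..X, W ((-x : ℝ) : ℂ) := by
      have := intervalIntegral.integral_comp_neg (a := 0) (b := X) (fun x : ℝ => W x)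
      rw [this]; simp
    rw [← intervalIntegral.integral_add_adjacent_intervals (b := 0) (hWc.intervalIntegrable _ _)
      (hWc.intervalIntegrable _ _), c2]
    simp only [id]
    rw [c1, intervalIntegral.integral_div, intervalIntegral.integral_neg,
      intervalIntegral.integral_add (hWc.intervalIntegrable _ _) (hWn.intervalIntegrable _ _)]
    ring
  -- shifted line limit
  have hWY : ∀ x : ℝ, W (hgY a 0 x) = hgc t a 0 x * exp (t * hgY a 0 x * z)
      - ((1 / t) / (hgY a 0 x) ^ 3 + z / (hgY a 0 x) ^ 2) - r * (hgY a 0 x)⁻¹ := by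
    intro x
    obtain ⟨n1, n2, n3⟩ := hgY_ne t a 0 x ht ha h1 h2
    rw [hW _ n1 n2 n3, hgc, hgD, div_div]
    simp only [div_eq_mul_inv]
    push_cast
    ring
  have LY : Tendsto (fun X : ℝ => ∫ x in (-X)..X, W (hgY a 0 x)) atTop
      (𝓝 (hgJ t a 0 z - 0 - r * (-(Real.pi * I)))) := by
    have l1 := intervalIntegral_tendsto_integral (hg_int0 t a ht ha h1 h2 z hz) tendsto_neg_atTop_atBot tendsto_id
    have l2 := hg_pow_lim a ha (1 / t) z
    have l3 := (hg_inv_lim a ha).const_mul r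
    refine ((l1.sub l2).sub l3).congr fun X => ?_
    have hne := fun x => (hgY_ne t a 0 x ht ha h1 h2).1
    have hc := hgY_cont a 0
    have k1 := hgF_cont t a 0 ht ha h1 h2 z
    have k2 : Continuous fun x : ℝ => ((1 / t : ℂ) / (hgY a 0 x) ^ 3 + z / (hgY a 0 x) ^ 2) :=
      (continuous_const.div (hc.pow 3) fun x => pow_ne_zero _ (hne x)).add
      (continuous_const.div (hc.pow 2) fun x => pow_ne_zero _ (hne x))
    have k3 : Continuous fun x : ℝ => r * (hgY a 0 x)⁻¹ := continuous_const.mul (hc.inv₀ hne)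
    have k12 : Continuous fun x : ℝ => hgc t a 0 x * exp (t * hgY a 0 x * z) -
        ((1 / t : ℂ) / (hgY a 0 x) ^ 3 + z / (hgY a 0 x) ^ 2) := k1.sub k2
    simp only [hWY, id]
    rw [intervalIntegral.integral_sub (k12.intervalIntegrable _ _) (k3.intervalIntegrable _ _),
      intervalIntegral.integral_sub (k1.intervalIntegrable _ _) (k2.intervalIntegrable _ _),
      intervalIntegral.integral_const_mul]
  -- sides
  have LS : ∀ σ : ℝ, |σ| = 1 → Tendsto (fun X : ℝ => ∫ y in (0:ℝ)..a, W (((σ * X : ℝ) : ℂ) + y * I)) atTop (𝓝 0) := by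
    intro σ hσ
    have hlim : Tendsto (fun X : ℝ => (16 * Real.exp (t * a * |z.im|) * Real.exp (-(κ * X)) +
        t⁻¹ * (X⁻¹) ^ 3 + ‖z‖ * (X⁻¹) ^ 2 + ‖r‖ * X⁻¹) * |a - 0|) atTop (𝓝 0) := by
      have u1 : Tendsto (fun X : ℝ => Real.exp (-(κ * X))) atTop (𝓝 0) :=
        Real.tendsto_exp_neg_atTop_nhds_zero.comp (tendsto_id.const_mul_atTop hκ0)
      have u2 : Tendsto (fun X : ℝ => X⁻¹) atTop (𝓝 0) := tendsto_inv_atTop_zero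
      have := ((((u1.const_mul (16 * Real.exp (t * a * |z.im|))).add ((u2.pow 3).const_mul t⁻¹)).add
        ((u2.pow 2).const_mul ‖z‖)).add (u2.const_mul ‖r‖)).mul_const |a - 0|
      simpa using this
    refine squeeze_zero_norm' ?_ hlim
    filter_upwards [eventually_ge_atTop (1 + t⁻¹)] with X hX
    have hX0 : 0 < X := by linarith
    refine intervalIntegral.norm_integral_le_of_norm_le_const fun y hy => ?_
    rw [uIoc_of_le ha.le] at hy
    set w : ℂ := ((σ * X : ℝ) : ℂ) + y * I with hw
    have hwre : w.re = σ * X := by simp [hw]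
    have hwim : w.im = y := by simp [hw]
    have habs : |w.re| = X := by rw [hwre, abs_mul, hσ, one_mul, abs_of_pos hX0]
    have hre0 : w.re ≠ 0 := by rw [← abs_pos, habs]; exact hX0
    have hwn : X ≤ ‖w‖ := by rw [← habs]; exact Complex.abs_re_le_norm w
    have hw0 : w ≠ 0 := by intro h; rw [h] at hre0; simp at hre0
    have b := hg_D_bound_far t 1 ht one_pos w (by linarith) (by linarith)
          (by rw [habs]
              calc 1 = t * t⁻¹ := by field_simp
                _ ≤ t * X := by gcongr; linarith)
    rw [habs] at b
    rw [hW w hw0 (hg_sinh_ne _ (Or.inl hre0)) (hg_sinh_ne _ (Or.inl (by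
      rw [Complex.re_ofReal_mul]; exact mul_ne_zero ht.ne' hre0)))]
    have hinv : ‖w‖⁻¹ ≤ X⁻¹ := by gcongr
    have f1 : ‖exp (t * w * z) / (w * sinh w * sinh (t * w))‖ ≤
        16 * Real.exp (t * a * |z.im|) * Real.exp (-(κ * X)) := by
      rw [div_eq_mul_inv, norm_mul, Complex.norm_exp, mul_assoc, Complex.re_ofReal_mul, Complex.mul_re, hwim]
      have m : t * (w.re * z.re - y * z.im) ≤ t * (X * |z.re| + a * |z.im|) := by
        have q1 := le_abs_self (w.re * z.re)
        rw [abs_mul, habs] at q1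
        have q2 : -(y * z.im) ≤ a * |z.im| := by
          have := neg_abs_le z.im
          have : y * (-z.im) ≤ y * |z.im| := by
            have := hy.1.le
            gcongr; linarith
          have : y * |z.im| ≤ a * |z.im| := by gcongr; exact hy.2
          linarith
        gcongr
        linarith
      calc _ ≤ Real.exp (t * (X * |z.re| + a * |z.im|)) * (16 / 1 * Real.exp (-(1 + t) * X)) := by
            gcongr
        _ = 16 * Real.exp (t * (X * |z.re| + a * |z.im|) + -(1 + t) * X) := by rw [Real.exp_add]; ring
        _ = _ := by
            rw [mul_assoc, ← Real.exp_add, hκ]; ring_nf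
    have f2 : ‖1 / ((t : ℂ) * w ^ 3)‖ ≤ t⁻¹ * (X⁻¹) ^ 3 := by
      rw [one_div, mul_inv, norm_mul, norm_inv, norm_inv, norm_pow, Complex.norm_real, Real.norm_eq_abs,
        abs_of_pos ht, ← inv_pow]
      gcongr
    have f3 : ‖z / w ^ 2‖ ≤ ‖z‖ * (X⁻¹) ^ 2 := by
      rw [div_eq_mul_inv, norm_mul, norm_inv, norm_pow, ← inv_pow]
      gcongr
    have f4 : ‖r / w‖ ≤ ‖r‖ * X⁻¹ := by
      rw [div_eq_mul_inv, norm_mul, norm_inv]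
      gcongr
    refine (norm_sub_le _ _).trans (add_le_add ?_ f4)
    refine (norm_sub_le _ _).trans (add_le_add ?_ f3)
    exact (norm_sub_le _ _).trans (add_le_add f1 f2)
  -- rectangle
  have rect : ∀ X : ℝ, (∫ x in (-X)..X, W x) - (∫ x in (-X)..X, W (hgY a 0 x)) +
      I * (∫ y in (0:ℝ)..a, W (((1 * X : ℝ) : ℂ) + y * I)) -
      I * (∫ y in (0:ℝ)..a, W (((-1 * X : ℝ) : ℂ) + y * I)) = 0 := by
    intro X
    have := Complex.integral_boundary_rect_eq_zero_of_differentiableOn W (((-X : ℝ)) : ℂ) (((X : ℝ) : ℂ) + a * I) ?_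
    · simpa [hgY] using this
    · intro y hy
      refine (hWd y ?_).differentiableWithinAt
      have hy2 : y.im ∈ uIcc (0:ℝ) a := by simpa using hy.2
      rw [uIcc_of_le ha.le] at hy2
      by_cases hre : y.re = 0
      · by_cases him : y.im = 0
        · left; exact Complex.ext hre him
        · right
          have hpos : 0 < y.im := lt_of_le_of_ne hy2.1 (Ne.symm him)
          refine ⟨hg_sinh_ne _ (Or.inr ⟨hpos, by linarith [hy2.2]⟩), hg_sinh_ne _ (Or.inr ?_)⟩
          rw [Complex.im_ofReal_mul]
          exact ⟨by positivity, lt_of_le_of_lt (by gcongr; exact hy2.2) h2⟩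
      · right
        refine ⟨hg_sinh_ne _ (Or.inl hre), hg_sinh_ne _ (Or.inl ?_)⟩
        rw [Complex.re_ofReal_mul]
        exact mul_ne_zero ht.ne' hre
  have T := (((LR.sub LY).add ((LS 1 (by simp)).const_mul I)).sub ((LS (-1) (by simp)).const_mul I)).congr rect
  have := tendsto_nhds_unique T tendsto_const_nhds
  linear_combination -(1 / 2 : ℂ) * this


def hgPoly (t : ℝ) (z : ℂ) : ℂ := -(Real.pi * t * z ^ 2 / 8) + Real.pi / 24 * (t + (t : ℂ)⁻¹)

def hgU (t a s : ℝ) (z : ℂ) : ℂ := I / 4 * hgJ t a s z + hgPoly t z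

lemma hypGammaArg_eq (t a : ℝ) (ht : 0 < t) (ha : 0 < a) (h1 : a < Real.pi) (h2 : t * a < Real.pi)
    (z : ℂ) (hz : t * |z.re| < 1 + t) : hypGammaArg (-t) z = hgU t a 0 z := by
  have e : ∀ y : ℝ, hypInt (-t) z y = hgH t z y := by
    intro y
    simp only [hypInt, hgH]
    push_cast
    simp only [neg_mul, Complex.sinh_neg, mul_neg, neg_div_neg_eq]
  rw [hypGammaArg]
  simp only [e]
  rw [hg_step1 t a ht ha h1 h2 z hz, hgU, hgPoly, mul_inv, Complex.inv_I]
  linear_combination (Real.pi : ℂ) / 4 * (t * z ^ 2 / 2 - (t + (t : ℂ)⁻¹) / 6) * I_sq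

lemma hypGammaArg_neg (τ : ℝ) (z : ℂ) : hypGammaArg τ (-z) = -hypGammaArg τ z := by
  have e : ∀ y : ℝ, hypInt τ (-z) y = - hypInt τ z y := by
    intro y
    simp only [hypInt, mul_neg, Complex.sinh_neg]
    ring
  rw [hypGammaArg, hypGammaArg]
  simp only [e]
  rw [integral_neg]
  ring

lemma hgPoly_diff (t : ℝ) : Differentiable ℂ (hgPoly t) := by unfold hgPoly; fun_prop

theorem hg_main (t : ℝ) (ht : 0 < t) :
    ∃ γc : ℂ → ℂ,
      (∀ z : ℂ, t * |z.re| < 1 + t → γc z = hypGammaArg (-t) z) ∧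
      (∀ z : ℂ, (t * |z.re| < 1 + t ∨ z.im ≠ 0) → AnalyticAt ℂ γc z) ∧
      (∀ z, z.im ≠ 0 → γc (-z) = - γc z) ∧
      (∀ a : ℝ, 0 < a → a < Real.pi → t * a < Real.pi → ∀ z : ℂ, 0 < z.im → γc z = hgU t a 1 z) := by
  classical
  have hpi := Real.pi_pos
  obtain ⟨b, hb0, hb1, hb2⟩ : ∃ b : ℝ, 0 < b ∧ b < Real.pi ∧ t * b < Real.pi := by
    refine ⟨Real.pi / (2 * (1 + t)), by positivity, ?_, ?_⟩
    · rw [div_lt_iff₀ (by positivity)]; nlinarith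
    · rw [← mul_div_assoc, div_lt_iff₀ (by positivity)]; nlinarith
  set γc : ℂ → ℂ := fun z => if t * |z.re| < 1 + t then hypGammaArg (-t) z
    else if 0 < z.im then hgU t b 1 z else - hgU t b 1 (-z) with hγ
  have hS : IsOpen {z : ℂ | t * |z.re| < 1 + t} :=
    isOpen_lt (by fun_prop) continuous_const
  have hU : IsOpen {z : ℂ | 0 < z.im} := isOpen_lt continuous_const Complex.continuous_im
  have hL : IsOpen {z : ℂ | z.im < 0} := isOpen_lt Complex.continuous_im continuous_const
  have hagree : ∀ a : ℝ, 0 < a → a < Real.pi → t * a < Real.pi → ∀ z : ℂ, t * |z.re| < 1 + t → 0 < z.im →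
      hypGammaArg (-t) z = hgU t a 1 z := by
    intro a ha h1 h2 z hz hzi
    rw [hypGammaArg_eq t a ht ha h1 h2 z hz, hgU, hgU, hgJ_eq t a ht ha h1 h2 z hz hzi]
  have hUan : ∀ a : ℝ, 0 < a → a < Real.pi → t * a < Real.pi → AnalyticOnNhd ℂ (hgU t a 1) {z : ℂ | 0 < z.im} := by
    intro a ha h1 h2
    refine DifferentiableOn.analyticOnNhd (fun z hz => ?_) hU
    exact (((hgJ1_diff t a ht ha h1 h2 z hz).const_mul _).add (hgPoly_diff t z)).differentiableWithinAt
  have hup : ∀ z : ℂ, 0 < z.im → γc z = hgU t b 1 z := by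
    intro z hz
    simp only [hγ]
    split_ifs with h
    · exact hagree b hb0 hb1 hb2 z h hz
    · rfl
  have hlow : ∀ z : ℂ, z.im < 0 → γc z = -hgU t b 1 (-z) := by
    intro z hz
    simp only [hγ]
    split_ifs with h h'
    · rw [← hagree b hb0 hb1 hb2 (-z) (by simpa using h) (by simpa using hz), hypGammaArg_neg, neg_neg]
    · linarith
    · rfl
  have hst : ∀ z : ℂ, t * |z.re| < 1 + t → γc z = hypGammaArg (-t) z := by
    intro z hz
    simp only [hγ]
    rw [if_pos hz]
  refine ⟨γc, hst, ?_, ?_, ?_⟩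
  · intro z hz
    by_cases h : t * |z.re| < 1 + t
    · have : AnalyticAt ℂ (hgU t b 0) z := by
        have : DifferentiableOn ℂ (hgU t b 0) {z : ℂ | t * |z.re| < 1 + t} := fun w hw =>
          (((hgJ0_diff t b ht hb0 hb1 hb2 w hw).const_mul _).add (hgPoly_diff t w)).differentiableWithinAt
        exact this.analyticOnNhd hS z h
      refine this.congr ?_
      filter_upwards [hS.mem_nhds h] with w hw
      rw [hst w hw, hypGammaArg_eq t b ht hb0 hb1 hb2 w hw]
    · have him := hz.resolve_left h
      rcases lt_or_gt_of_ne him with hn | hp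
      · have : AnalyticAt ℂ (fun w => -hgU t b 1 (-w)) z := by
          have a1 := hUan b hb0 hb1 hb2 (-z) (by simpa using hn)
          exact (a1.comp_of_eq (f := fun w : ℂ => -w) (analyticAt_id.neg) rfl).neg
        refine this.congr ?_
        filter_upwards [hL.mem_nhds hn] with w hw
        exact (hlow w hw).symm
      · refine (hUan b hb0 hb1 hb2 z hp).congr ?_
        filter_upwards [hU.mem_nhds hp] with w hw
        exact (hup w hw).symm
  · intro z hz0
    rcases lt_or_gt_of_ne hz0 with hn | hp
    · rw [hlow z hn, hup (-z) (by simpa using hn), neg_neg]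
    · rw [hup z hp, hlow (-z) (by simpa using hp), neg_neg]
  · intro a ha h1 h2 z hz
    rw [hup z hz]
    have hcon : IsPreconnected {z : ℂ | 0 < z.im} := (convex_halfSpace_im_gt 0).isPreconnected
    have := (hUan b hb0 hb1 hb2).eqOn_of_preconnected_of_eventuallyEq (hUan a ha h1 h2) hcon
      (z₀ := I) (by simp) ?_
    · exact this hz
    · have m1 : I ∈ {z : ℂ | t * |z.re| < 1 + t} := by simp; linarith
      have m2 : I ∈ {z : ℂ | 0 < z.im} := by simp
      filter_upwards [hS.mem_nhds m1, hU.mem_nhds m2] with w w1 w2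
      rw [← hagree b hb0 hb1 hb2 w w1 w2, ← hagree a ha h1 h2 w w1 w2]

/-- `γ_τ` has an analytic continuation to the cut plane, with the asymptotics
`|∓γ_τ(z) + πτz²/8 − (π/24)(τ+τ⁻¹)| = O(exp((ε − π/r)|Im z|))` as `Im z → ±∞`,
uniformly for `Re z` in compact subsets of `ℝ`, where `r = max(1, −τ⁻¹)`. -/
theorem hyperbolic_gamma_asymptotics (τ : ℝ) (hτ : τ < 0) :
    ∃ γc : ℂ → ℂ,
      (∀ z : ℂ, |z.re| < 1 - τ⁻¹ → γc z = hypGammaArg τ z) ∧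
      AnalyticOnNhd ℂ γc (hypCutPlane τ) ∧
      (∀ ε : ℝ, 0 < ε → ∀ K : Set ℝ, IsCompact K →
        ∃ C M : ℝ, 0 < M ∧ ∀ z : ℂ, z.re ∈ K →
          ((M ≤ z.im →
            ‖-γc z + (Real.pi : ℂ) * (τ : ℂ) * z ^ 2 / 8 -
                ((Real.pi : ℂ) / 24) * ((τ : ℂ) + ((τ : ℂ))⁻¹)‖ ≤
              C * Real.exp ((ε - Real.pi / max 1 (-τ⁻¹)) * |z.im|)) ∧
          (z.im ≤ -M →
            ‖γc z + (Real.pi : ℂ) * (τ : ℂ) * z ^ 2 / 8 -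
                ((Real.pi : ℂ) / 24) * ((τ : ℂ) + ((τ : ℂ))⁻¹)‖ ≤
              C * Real.exp ((ε - Real.pi / max 1 (-τ⁻¹)) * |z.im|)))) := by
  obtain ⟨t, rfl⟩ : ∃ t : ℝ, τ = -t := ⟨-τ, by ring⟩
  have ht : 0 < t := by linarith
  have hstrip : ∀ x : ℝ, |x| < 1 - (-t)⁻¹ ↔ t * |x| < 1 + t := by
    intro x
    have : 1 - (-t)⁻¹ = (1 + t) / t := by rw [inv_neg]; field_simp; ring
    rw [this, lt_div_iff₀ ht, mul_comm]
  obtain ⟨γc, hst, han, hodd, hup⟩ := hg_main t ht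
  refine ⟨γc, fun z hz => hst z ((hstrip _).1 hz), ?_, ?_⟩
  · intro z hz
    apply han
    by_cases him : z.im = 0
    · left
      rw [← hstrip, abs_lt]
      have : ¬ (z.re ≤ -1 + (-t)⁻¹ ∨ 1 - (-t)⁻¹ ≤ z.re) := fun h => hz ⟨him, h⟩
      push Not at this
      exact ⟨by linarith [this.1], this.2⟩
    · exact Or.inr him
  · intro ε hε K hK
    have hpi := Real.pi_pos
    set r : ℝ := max 1 (-(-t)⁻¹) with hr
    have hr1 : 1 ≤ r := le_max_left _ _
    have hr2 : 1 ≤ t * r := by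
      have : t⁻¹ ≤ r := by rw [hr, inv_neg, neg_neg]; exact le_max_right _ _
      calc 1 = t * t⁻¹ := by field_simp
        _ ≤ t * r := by gcongr
    have hr3 : Real.pi / r ≤ Real.pi := div_le_self hpi.le hr1
    have hr4 : Real.pi / r ≤ t * Real.pi := by
      rw [div_le_iff₀ (by positivity)]; nlinarith
    have hr0 : 0 < Real.pi / r := by positivity
    -- choose c = t * a
    obtain ⟨c, hc0, hc1, hc2⟩ : ∃ c : ℝ, 0 < c ∧ c < Real.pi / r ∧ Real.pi / r - ε ≤ c := by
      refine ⟨max (Real.pi / r / 2) (Real.pi / r - ε), lt_max_of_lt_left (by positivity),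
        max_lt (by linarith) (by linarith), le_max_right _ _⟩
    have hta : t * (c / t) = c := by field_simp
    have ha0 : 0 < c / t := by positivity
    have ha1 : c / t < Real.pi := by rw [div_lt_iff₀ ht]; linarith
    have ha2 : t * (c / t) < Real.pi := by rw [hta]; linarith
    obtain ⟨B, hB⟩ := hK.isBounded.exists_norm_le
    obtain ⟨C, hC0, hC⟩ := hgJ1_bound t (c / t) ht ha0 ha1 ha2 (max B 0) (le_max_right _ _)
    have key : ∀ z : ℂ, |z.re| ≤ max B 0 → 1 ≤ z.im →
        ‖-γc z + (Real.pi : ℂ) * ((-t : ℝ) : ℂ) * z ^ 2 / 8 -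
                ((Real.pi : ℂ) / 24) * (((-t : ℝ) : ℂ) + (((-t : ℝ) : ℂ))⁻¹)‖ ≤
              C / 4 * Real.exp ((ε - Real.pi / r) * |z.im|) := by
      intro z hz hzi
      rw [hup (c / t) ha0 ha1 ha2 z (by linarith), hgU, hgPoly]
      have : -(I / 4 * hgJ t (c / t) 1 z + (-(Real.pi * t * z ^ 2 / 8) + Real.pi / 24 * (t + (t : ℂ)⁻¹)))
        + (Real.pi : ℂ) * ((-t : ℝ) : ℂ) * z ^ 2 / 8 -
                ((Real.pi : ℂ) / 24) * (((-t : ℝ) : ℂ) + (((-t : ℝ) : ℂ))⁻¹) = -(I / 4) * hgJ t (c / t) 1 z := by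
        push_cast
        rw [inv_neg]
        ring
      rw [this, norm_mul]
      have hn : ‖-(I / 4)‖ = 1 / 4 := by simp
      rw [hn, abs_of_pos (by linarith)]
      have := hC z hz hzi
      have h2 : Real.exp (-t * (c / t) * z.im) ≤ Real.exp ((ε - Real.pi / r) * z.im) := by
        rw [neg_mul, hta]
        gcongr
        linarith
      have h3 : C * Real.exp (-t * (c / t) * z.im) ≤ C * Real.exp ((ε - Real.pi / r) * z.im) := by gcongr
      linarith
    refine ⟨C / 4, 1, one_pos, fun z hz => ?_⟩
    have hzB : |z.re| ≤ max B 0 := (hB _ hz).trans (le_max_left _ _)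
    refine ⟨fun hi => key z hzB hi, fun hi => ?_⟩
    have := key (-z) (by simpa using hzB) (by simp; linarith)
    have him : z.im ≠ 0 := by intro h; rw [h] at hi; linarith
    rw [hodd z him, neg_neg, neg_sq, Complex.neg_im, abs_neg] at this
    exact this
end
end
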